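/- arXiv:0810.3619 — 8 statements merged into one kernel-verified Lean document; each statement's English description precedes it below -/
import Mathlib

section
/- Let v, u be nonnegative functions in L^1 of a measure space such that the Kullback-Leibler distance d(v,u) is defined. Then \| v - u \|_{L^1}^2 <= ( (2/3) \| v \|_{L^1} + (4/3) \| u \|_{L^1} ) \cdot d(v,u). -/
/-!
The bound follows from the pointwise inequality `(v - u)² ≤ ((2/3) v + (4/3) u) · k`, where
`k = v log (v/u) - v + u ≥ 0`, by Cauchy-Schwarz. By homogeneity the pointwise inequality reduces
to `(x - 1)² ≤ ((2/3) x + (4/3)) (x log x + 1 - x)` for `x = v/u ≥ 0`. Both sides vanish at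
`x = 1`, and the derivative of the difference is `(4/3) ((x + 1) log x - 2 (x - 1))`, which has the
sign of `x - 1` because `log x` dominates `2 (x - 1) / (x + 1)` for `x ≥ 1`, and symmetrically under
`x ↦ 1/x`.

Cauchy-Schwarz is used in discriminant form: the pointwise inequality gives
`0 ≤ s² w - 2 s |v - u| + k` for every real `s`, with `w = (2/3) v + (4/3) u`. The integral of the
right-hand side is then a nonnegative quadratic in `s`, so its discriminant is nonpositive. This
needs no integrability of square roots.
-/

open MeasureTheory Real Filter

/-- The Kullback-Leibler distance `d(v,u) = ∫ [ v ln(v/u) - v + u ]`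
(with the conventions `0 ln 0 = 0`). -/
noncomputable def KL {α : Type*} [MeasurableSpace α] (μ : Measure α) (v u : α → ℝ) : ℝ :=
  ∫ t, (v t * Real.log (v t / u t) - v t + u t) ∂μ

open InformationTheory

lemma two_mul_sub_le_mul_log {x : ℝ} (hx : 1 ≤ x) : 2 * (x - 1) ≤ (x + 1) * log x := by
  have h := Real.le_log_one_add_of_nonneg (x := x - 1) (by linarith)
  rw [div_le_iff₀ (by linarith)] at h
  ring_nf at h ⊢
  linarith

lemma mul_log_le_two_mul_sub {x : ℝ} (hx0 : 0 < x) (hx : x ≤ 1) :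
    (x + 1) * log x ≤ 2 * (x - 1) := by
  have h := two_mul_sub_le_mul_log (one_le_inv_iff₀.2 ⟨hx0, hx⟩)
  rw [log_inv] at h
  have h2 := mul_le_mul_of_nonneg_left h hx0.le
  have e1 : x * (2 * (x⁻¹ - 1)) = 2 * (1 - x) := by field_simp
  have e2 : x * ((x⁻¹ + 1) * -log x) = -((x + 1) * log x) := by field_simp; ring
  rw [e1, e2] at h2
  linarith

lemma hasDerivAt_klFun_gap {x : ℝ} (hx : x ≠ 0) :
    HasDerivAt (fun x => (2 / 3 * x + 4 / 3) * klFun x - (x - 1) ^ 2)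
      (4 / 3 * ((x + 1) * log x - 2 * (x - 1))) x := by
  have h1 : HasDerivAt (fun x : ℝ => 2 / 3 * x + 4 / 3) (2 / 3) x := by
    simpa using ((hasDerivAt_id x).const_mul (2 / 3 : ℝ)).add_const (4 / 3)
  have h2 : HasDerivAt (fun x : ℝ => (x - 1) ^ 2) (2 * (x - 1)) x := by
    simpa using ((hasDerivAt_id x).sub_const 1).fun_pow 2
  refine ((h1.mul (hasDerivAt_klFun hx)).sub h2).congr_deriv ?_
  rw [klFun_apply]
  ring

/-- The pointwise inequality, normalised to `u = 1`. -/
lemma sq_sub_one_le_mul_klFun {x : ℝ} (hx : 0 ≤ x) :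
    (x - 1) ^ 2 ≤ (2 / 3 * x + 4 / 3) * klFun x := by
  set g : ℝ → ℝ := fun x => (2 / 3 * x + 4 / 3) * klFun x - (x - 1) ^ 2 with hg
  have hc : Continuous g := by
    have := continuous_klFun
    fun_prop
  have g1 : g 1 = 0 := by simp [hg, klFun_one]
  suffices h : 0 ≤ g x from sub_nonneg.1 h
  rw [← g1]
  rcases le_total x 1 with h | h
  · have hanti : AntitoneOn g (Set.Icc 0 1) := by
      refine antitoneOn_of_hasDerivWithinAt_nonpos (convex_Icc 0 1) hc.continuousOn
        (f' := fun x => 4 / 3 * ((x + 1) * log x - 2 * (x - 1))) ?_ ?_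
      all_goals
        intro y hy
        rw [interior_Icc] at hy
      · exact (hasDerivAt_klFun_gap hy.1.ne').hasDerivWithinAt
      · have := mul_log_le_two_mul_sub hy.1 hy.2.le
        linarith
    exact hanti ⟨hx, h⟩ ⟨zero_le_one, le_rfl⟩ h
  · have hmono : MonotoneOn g (Set.Ici 1) := by
      refine monotoneOn_of_hasDerivWithinAt_nonneg (convex_Ici 1) hc.continuousOn
        (f' := fun x => 4 / 3 * ((x + 1) * log x - 2 * (x - 1))) ?_ ?_
      all_goals
        intro y hy
        rw [interior_Ici, Set.mem_Ioi] at hy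
      · exact (hasDerivAt_klFun_gap (by linarith)).hasDerivWithinAt
      · have := two_mul_sub_le_mul_log hy.le
        linarith
    exact hmono (Set.mem_Ici.2 le_rfl) h h

/-- The integrand `s² w - 2 s |v - u| + k` of the quadratic is nonnegative. -/
lemma quadratic_integrand_nonneg {v u : ℝ} (hv : 0 ≤ v) (hu : 0 ≤ u) (hac : u = 0 → v = 0)
    (s : ℝ) :
    0 ≤ s ^ 2 * (2 / 3 * |v| + 4 / 3 * |u|) - 2 * s * |v - u| + (v * log (v / u) - v + u) := by
  rcases hu.eq_or_lt with rfl | hu'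
  · simp [hac rfl]
  have hx : 0 ≤ v / u := div_nonneg hv hu
  have hk : v * log (v / u) - v + u = u * klFun (v / u) := by
    rw [klFun_apply]
    field_simp
    ring
  have hk0 : 0 ≤ u * klFun (v / u) := mul_nonneg hu (klFun_nonneg hx)
  have key : (v - u) ^ 2 ≤ (2 / 3 * v + 4 / 3 * u) * (u * klFun (v / u)) := by
    have h := mul_le_mul_of_nonneg_left (sq_sub_one_le_mul_klFun hx) (sq_nonneg u)
    calc (v - u) ^ 2 = u ^ 2 * (v / u - 1) ^ 2 := by field_simp
      _ ≤ _ := h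
      _ = _ := by field_simp
  rw [hk, abs_of_nonneg hv, abs_of_nonneg hu]
  set w := 2 / 3 * v + 4 / 3 * u
  set k := u * klFun (v / u)
  have hw : 0 ≤ w := by positivity
  have h : 2 * s * |v - u| ≤ s ^ 2 * w + k := by
    refine le_of_abs_le (abs_le_of_sq_le_sq ?_ (by positivity))
    have h1 := mul_le_mul_of_nonneg_left key (sq_nonneg s)
    rw [mul_pow, sq_abs]
    nlinarith [sq_nonneg (s ^ 2 * w - k)]
  linarith

/-- for nonnegative `v, u ∈ L¹` whose KL-distance is defined,
`‖v - u‖₁² ≤ ( (2/3)‖v‖₁ + (4/3)‖u‖₁ ) · d(v,u)`. -/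
theorem kl_l1_bound {α : Type*} [MeasurableSpace α] (μ : Measure α)
    (v u : α → ℝ)
    (hv : Integrable v μ) (hu : Integrable u μ)
    (hv0 : 0 ≤ᵐ[μ] v) (hu0 : 0 ≤ᵐ[μ] u)
    (hd : Integrable (fun t => v t * Real.log (v t / u t) - v t + u t) μ)
    (hac : ∀ᵐ t ∂μ, u t = 0 → v t = 0) :
    (∫ t, |v t - u t| ∂μ) ^ 2 ≤
      ((2 / 3) * (∫ t, |v t| ∂μ) + (4 / 3) * (∫ t, |u t| ∂μ)) * KL μ v u := by
  have hi1 : Integrable (fun t => 2 / 3 * |v t| + 4 / 3 * |u t|) μ :=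
    (hv.abs.const_mul (2 / 3)).add (hu.abs.const_mul (4 / 3))
  have hi2 : Integrable (fun t => |v t - u t|) μ := (hv.sub hu).abs
  have hquad : ∀ s : ℝ, 0 ≤ ((2 / 3) * (∫ t, |v t| ∂μ) + (4 / 3) * (∫ t, |u t| ∂μ)) * (s * s)
      + (-2 * ∫ t, |v t - u t| ∂μ) * s + KL μ v u := by
    intro s
    have hnn : 0 ≤ ∫ t, (s ^ 2 * (2 / 3 * |v t| + 4 / 3 * |u t|) - 2 * s * |v t - u t|
        + (v t * log (v t / u t) - v t + u t)) ∂μ := by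
      refine integral_nonneg_of_ae ?_
      filter_upwards [hv0, hu0, hac] with t h1 h2 h3
      exact quadratic_integrand_nonneg h1 h2 h3 s
    have hi3 : Integrable (fun t => s ^ 2 * (2 / 3 * |v t| + 4 / 3 * |u t|) - 2 * s * |v t - u t|) μ :=
      (hi1.const_mul (s ^ 2)).sub (hi2.const_mul (2 * s))
    rw [integral_add hi3 hd,
      integral_sub (hi1.const_mul (s ^ 2)) (hi2.const_mul (2 * s)), integral_const_mul,
      integral_const_mul, integral_add (hv.abs.const_mul _) (hu.abs.const_mul _),
      integral_const_mul, integral_const_mul] at hnn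
    unfold KL
    linarith
  have h := discrim_le_zero hquad
  rw [discrim] at h
  linarith
end

section
/- Let { v_n } and { u_n } be sequences of nonnegative functions in L^1 of a measure space such that each d(v_n, u_n) is defined. If { u_n } is bounded in L^1 and lim_{n -> \infty} d(v_n, u_n) = 0, then lim_{n -> \infty} \| v_n - u_n \|_{L^1} = 0. -/
/-!
With `a = √v` and `b = √u`, the inequality `log x ≤ x - 1` at `x = b / a` shows that the
Kullback-Leibler integrand dominates the Hellinger integrand `(a - b) ^ 2`. Moreover
`|v - u| = |a - b| (a + b) ≤ (a - b) ^ 2 + 2 b |a - b|`, and Young's inequality with parameter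
`ε > 0` bounds the last term by `ε u + (a - b) ^ 2 / ε`. Integrating,
`‖v - u‖₁ ≤ ε ‖u‖₁ + (1 + 1 / ε) d(v, u)` for every `ε > 0`. Boundedness of `‖uₙ‖₁` makes the first
term uniformly small, and then `d(vₙ, uₙ) → 0` handles the second.
-/

open MeasureTheory Real Filter

/-- The Kullback-Leibler integrand dominates the squared difference of square roots. -/
lemma sq_sub_le_kl_integrand {a b : ℝ} (ha : 0 ≤ a) (hb : 0 ≤ b) (hab : b = 0 → a = 0) :
    (a - b) ^ 2 ≤ a ^ 2 * Real.log (a ^ 2 / b ^ 2) - a ^ 2 + b ^ 2 := by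
  rcases ha.eq_or_lt with rfl | ha
  · simp
  have hb : 0 < b := hb.lt_of_ne fun h => ha.ne' (hab h.symm)
  have hlog : Real.log (a ^ 2 / b ^ 2) = -(2 * Real.log (b / a)) := by
    rw [← div_pow, Real.log_pow, ← inv_div b a, Real.log_inv]
    push_cast
    ring
  have h := mul_le_mul_of_nonneg_left (Real.log_le_sub_one_of_pos (div_pos hb ha)) (sq_nonneg a)
  have h2 : a ^ 2 * (b / a - 1) = a * b - a ^ 2 := by field_simp
  rw [hlog]
  nlinarith

/-- The pointwise form of `‖v - u‖₁ ≤ ε ‖u‖₁ + (1 + 1 / ε) d(v, u)`. -/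
lemma abs_sub_le_kl_integrand {v u ε : ℝ} (hv : 0 ≤ v) (hu : 0 ≤ u) (huv : u = 0 → v = 0)
    (hε : 0 < ε) :
    |v - u| ≤ ε * |u| + (1 + 1 / ε) * (v * Real.log (v / u) - v + u) := by
  obtain ⟨a, ha, rfl⟩ : ∃ a, 0 ≤ a ∧ a ^ 2 = v := ⟨√v, Real.sqrt_nonneg v, Real.sq_sqrt hv⟩
  obtain ⟨b, hb, rfl⟩ : ∃ b, 0 ≤ b ∧ b ^ 2 = u := ⟨√u, Real.sqrt_nonneg u, Real.sq_sqrt hu⟩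
  have hkl := sq_sub_le_kl_integrand ha hb fun h => by simpa using huv (by simp [h])
  have hyoung : 2 * b * |a - b| ≤ ε * b ^ 2 + 1 / ε * (a - b) ^ 2 := by
    have h : ε * b ^ 2 + 1 / ε * (a - b) ^ 2 - 2 * b * |a - b|
        = (ε * b - |a - b|) ^ 2 / ε := by
      rw [← sq_abs (a - b)]
      field_simp
      ring
    have : 0 ≤ (ε * b - |a - b|) ^ 2 / ε := by positivity
    linarith
  have hfac : |a ^ 2 - b ^ 2| ≤ (a - b) ^ 2 + 2 * b * |a - b| := by
    have h : a ^ 2 - b ^ 2 = (a - b) * ((a - b) + 2 * b) := by ring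
    rw [h, abs_mul, ← sq_abs (a - b)]
    have := abs_add_le (a - b) (2 * b)
    rw [abs_of_nonneg (by positivity : 0 ≤ 2 * b)] at this
    nlinarith [abs_nonneg (a - b)]
  have hmul := mul_le_mul_of_nonneg_left hkl (by positivity : 0 ≤ 1 + 1 / ε)
  rw [abs_of_nonneg (sq_nonneg b)]
  linarith

/-- if `{vₙ}, {uₙ}` are sequences of nonnegative `L¹` functions with each
`d(vₙ,uₙ)` defined, `{uₙ}` bounded in `L¹` and `d(vₙ,uₙ) → 0`, then `‖vₙ - uₙ‖₁ → 0`. -/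
theorem kl_to_zero_implies_l1_to_zero {α : Type*} [MeasurableSpace α] (μ : Measure α)
    (v u : ℕ → α → ℝ)
    (hv : ∀ n, Integrable (v n) μ) (hu : ∀ n, Integrable (u n) μ)
    (hv0 : ∀ n, 0 ≤ᵐ[μ] v n) (hu0 : ∀ n, 0 ≤ᵐ[μ] u n)
    (hd : ∀ n, Integrable (fun t => v n t * Real.log (v n t / u n t) - v n t + u n t) μ)
    (hac : ∀ n, ∀ᵐ t ∂μ, u n t = 0 → v n t = 0)
    (hbd : ∃ C : ℝ, ∀ n, (∫ t, |u n t| ∂μ) ≤ C)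
    (hlim : Tendsto (fun n => KL μ (v n) (u n)) atTop (nhds 0)) :
    Tendsto (fun n => ∫ t, |v n t - u n t| ∂μ) atTop (nhds 0) := by
  obtain ⟨C, hC⟩ := hbd
  have hC0 : 0 ≤ C := (integral_nonneg fun t => abs_nonneg (u 0 t)).trans (hC 0)
  have key (ε : ℝ) (hε : 0 < ε) (n : ℕ) :
      ∫ t, |v n t - u n t| ∂μ ≤ ε * C + (1 + 1 / ε) * KL μ (v n) (u n) := by
    calc ∫ t, |v n t - u n t| ∂μ
        ≤ ∫ t, (ε * |u n t| + (1 + 1 / ε) *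
            (v n t * Real.log (v n t / u n t) - v n t + u n t)) ∂μ := by
          refine integral_mono_ae ((hv n).sub (hu n)).abs
            (((hu n).abs.const_mul ε).add ((hd n).const_mul (1 + 1 / ε))) ?_
          filter_upwards [hv0 n, hu0 n, hac n] with t h1 h2 h3
          exact abs_sub_le_kl_integrand h1 h2 h3 hε
      _ = ε * ∫ t, |u n t| ∂μ + (1 + 1 / ε) * KL μ (v n) (u n) := by
          rw [integral_add ((hu n).abs.const_mul ε) ((hd n).const_mul (1 + 1 / ε)),
            integral_const_mul, integral_const_mul, KL]
      _ ≤ ε * C + (1 + 1 / ε) * KL μ (v n) (u n) := by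
          gcongr
          exact hC n
  refine tendsto_order.2 ⟨fun r hr => .of_forall fun n =>
    hr.trans_le (integral_nonneg fun t => abs_nonneg _), fun r hr => ?_⟩
  -- This `ε` satisfies `ε * C < r`, also when `C = 0`.
  set ε := r / (C + 1) with hε_def
  have hε : 0 < ε := by positivity
  have hεC : ε * C < r := by
    have : ε * (C + 1) = r := by rw [hε_def]; field_simp
    linarith
  have hT : Tendsto (fun n => ε * C + (1 + 1 / ε) * KL μ (v n) (u n)) atTop (nhds (ε * C)) := by
    simpa using (hlim.const_mul (1 + 1 / ε)).const_add (ε * C)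
  filter_upwards [hT.eventually_lt_const hεC] with n hn
  exact (key ε hε n).trans_lt hn
end

section
/- Under assumptions (A1)-(A3), for every x in \Delta and every j in {0,...,N-1}, the EM update P_j(x) := x \cdot A_j^*( y_j / (A_j x) ) (pointwise, where A_j^* w (t) = \int_\Sigma a_j(s,t) w(s) ds) satisfies: P_j(x) belongs to \Delta, and d( P_j(x), x ) <= f_j(x) - f_j( P_j(x) ). -/
/-!
Write `b = A x`, `h = A* (y / b)`, `P = x h` and `c = A P`. The bounds `m ≤ a ≤ M` give
`m ≤ b, c ≤ M` and make `h` bounded above and bounded away from zero, so every integrand below is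
integrable. Fubini's theorem, in the form `∫ g (A f) = ∫ f (A* g)`, shows
`∫ P = ∫ (y / b) b = 1`; combined with `A* 1 = 1` it also shows `∫ b = ∫ c = 1`. Hence

* `d(P, x) = ∫ x h log h`,
* `d(y, b) - d(y, c) = ∫ y log (c / b)`.

For fixed `s`, `a(s,t) x(t) / b(s)` is a probability density in `t`, and `h` has mean `c(s) / b(s)`
under it. Jensen's inequality for the logarithm gives `A (x log h) ≤ b log (c / b)`. Multiplying by
`y / b`, integrating, and applying Fubini on the left yields `∫ x h log h ≤ ∫ y log (c / b)`.
-/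

open MeasureTheory Real Filter

/-- The Fredholm integral operator `(A x)(s) = ∫_Ω a(s,t) x(t) dt`. -/
noncomputable def opA {d : ℕ} (Ω : Set (Fin d → ℝ)) (a : (Fin d → ℝ) → (Fin d → ℝ) → ℝ)
    (x : (Fin d → ℝ) → ℝ) : (Fin d → ℝ) → ℝ :=
  fun s => ∫ t in Ω, a s t * x t

/-- The adjoint operator `(A* w)(t) = ∫_Σ a(s,t) w(s) ds`. -/
noncomputable def opAstar {d : ℕ} (S : Set (Fin d → ℝ)) (a : (Fin d → ℝ) → (Fin d → ℝ) → ℝ)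
    (w : (Fin d → ℝ) → ℝ) : (Fin d → ℝ) → ℝ :=
  fun t => ∫ s in S, a s t * w s

/-- One EM step `P(x) = x · A*( y / (A x) )`. -/
noncomputable def emStep {d : ℕ} (Ω S : Set (Fin d → ℝ))
    (a : (Fin d → ℝ) → (Fin d → ℝ) → ℝ) (y x : (Fin d → ℝ) → ℝ) : (Fin d → ℝ) → ℝ :=
  fun t => x t * opAstar S a (fun s => y s / opA Ω a x s) t

/-- Membership in `Δ = { x ∈ L¹(Ω) : x ≥ 0, ∫_Ω x = 1 }`. -/
def InDelta {d : ℕ} (Ω : Set (Fin d → ℝ)) (x : (Fin d → ℝ) → ℝ) : Prop :=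
  Integrable x (volume.restrict Ω) ∧ (0 ≤ᵐ[volume.restrict Ω] x) ∧ (∫ t in Ω, x t) = 1

namespace EMStep

variable {α β : Type*} [MeasurableSpace α] [MeasurableSpace β]

/-- Duality `∫ g (A f) = ∫ f (A* g)` for a bounded kernel, together with integrability of both
sides. -/
lemma integral_mul_duality {ν : Measure α} {μ : Measure β} [IsFiniteMeasure ν] [IsFiniteMeasure μ]
    {a : α → β → ℝ} (ha : Measurable (Function.uncurry a)) {M : ℝ}
    (hM : ∀ᵐ p ∂(ν.prod μ), |a p.1 p.2| ≤ M) {g : α → ℝ} {f : β → ℝ}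
    (hg : Integrable g ν) (hf : Integrable f μ) :
    Integrable (fun s => g s * ∫ t, a s t * f t ∂μ) ν ∧
    Integrable (fun t => f t * ∫ s, a s t * g s ∂ν) μ ∧
    ∫ s, g s * ∫ t, a s t * f t ∂μ ∂ν = ∫ t, f t * ∫ s, a s t * g s ∂ν ∂μ := by
  have hG : Integrable (fun p : α × β => a p.1 p.2 * (g p.1 * f p.2)) (ν.prod μ) :=
    (hg.mul_prod hf).bdd_mul (c := M) ha.aestronglyMeasurable hM
  have e1 : ∀ s, ∫ t, a s t * (g s * f t) ∂μ = g s * ∫ t, a s t * f t ∂μ := by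
    intro s
    rw [← integral_const_mul]
    congr 1; ext t; ring
  have e2 : ∀ t, ∫ s, a s t * (g s * f t) ∂ν = f t * ∫ s, a s t * g s ∂ν := by
    intro t
    rw [← integral_const_mul]
    congr 1; ext s; ring
  refine ⟨?_, ?_, ?_⟩
  · simpa only [e1] using hG.integral_prod_left
  · simpa only [e2] using hG.integral_prod_right
  · have := integral_integral_swap (f := fun s t => a s t * (g s * f t)) hG
    simpa only [e1, e2] using this

/-- A kernel row bounded between `m` and `M` averages a nonnegative `f` to a value between
`m ∫ f` and `M ∫ f`. -/
lemma integral_mul_bounds {μ : Measure β} {k f : β → ℝ} {m M : ℝ} (hk : Measurable k)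
    (hm : 0 < m) (hb : ∀ᵐ t ∂μ, m ≤ k t ∧ k t ≤ M) (hf : Integrable f μ) (hf0 : 0 ≤ᵐ[μ] f) :
    m * ∫ t, f t ∂μ ≤ ∫ t, k t * f t ∂μ ∧ ∫ t, k t * f t ∂μ ≤ M * ∫ t, f t ∂μ := by
  have hi : Integrable (fun t => k t * f t) μ := by
    refine hf.bdd_mul (c := M) hk.aestronglyMeasurable ?_
    filter_upwards [hb] with t ht
    rw [Real.norm_eq_abs, abs_of_nonneg (hm.le.trans ht.1)]
    exact ht.2
  rw [← integral_const_mul, ← integral_const_mul]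
  constructor
  · refine integral_mono_ae (hf.const_mul m) hi ?_
    filter_upwards [hb, hf0] with t ht h0
    exact mul_le_mul_of_nonneg_right ht.1 h0
  · refine integral_mono_ae hi (hf.const_mul M) ?_
    filter_upwards [hb, hf0] with t ht h0
    exact mul_le_mul_of_nonneg_right ht.2 h0

/-- The logarithm of a function bounded between two positive constants is a bounded multiplier. -/
lemma integrable_mul_log {μ : Measure β} {f u : β → ℝ} {l L : ℝ} (hf : Integrable f μ)
    (hu : AEStronglyMeasurable u μ) (hl : 0 < l) (hb : ∀ᵐ t ∂μ, l ≤ u t ∧ u t ≤ L) :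
    Integrable (fun t => f t * Real.log (u t)) μ := by
  refine hf.mul_bdd (c := max |Real.log l| |Real.log L|)
    (Real.measurable_log.comp_aemeasurable hu.aemeasurable).aestronglyMeasurable ?_
  filter_upwards [hb] with t ht
  rw [Real.norm_eq_abs]
  exact abs_le_max_abs_abs (Real.log_le_log hl ht.1)
    (Real.log_le_log (hl.trans_le ht.1) ht.2)

/-- Jensen's inequality for the logarithm, with an unnormalized density `w`. -/
lemma jensen_log {μ : Measure β} {w h : β → ℝ} (hw : Integrable w μ) (hw0 : 0 ≤ᵐ[μ] w)
    (hwh : Integrable (fun t => w t * h t) μ) (hwl : Integrable (fun t => w t * Real.log (h t)) μ)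
    (hh : ∀ᵐ t ∂μ, 0 < h t) (hB : 0 < ∫ t, w t ∂μ) (hC : 0 < ∫ t, w t * h t ∂μ) :
    ∫ t, w t * Real.log (h t) ∂μ ≤
      (∫ t, w t ∂μ) * Real.log ((∫ t, w t * h t ∂μ) / ∫ t, w t ∂μ) := by
  set B := ∫ t, w t ∂μ with hBdef
  set C := ∫ t, w t * h t ∂μ with hCdef
  have hr : 0 < C / B := div_pos hC hB
  -- The tangent line to `log` at the mean `C / B` lies above the graph.
  have key : ∫ t, w t * Real.log (h t) ∂μ ≤
      ∫ t, (w t * (Real.log (C / B) - 1) + w t * h t * (B / C)) ∂μ := by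
    refine integral_mono_ae hwl ((hw.mul_const _).add (hwh.mul_const _)) ?_
    filter_upwards [hw0, hh] with t h0 h1
    have h2 := Real.log_le_sub_one_of_pos (div_pos h1 hr)
    rw [Real.log_div h1.ne' hr.ne'] at h2
    have h3 : h t / (C / B) = h t * (B / C) := by field_simp
    rw [h3] at h2
    have h4 : Real.log (h t) ≤ (Real.log (C / B) - 1) + h t * (B / C) := by linarith
    calc w t * Real.log (h t) ≤ w t * ((Real.log (C / B) - 1) + h t * (B / C)) :=
          mul_le_mul_of_nonneg_left h4 h0
      _ = _ := by ring
  rw [integral_add (hw.mul_const _) (hwh.mul_const _), integral_mul_const, integral_mul_const,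
    ← hBdef, ← hCdef] at key
  have : C * (B / C) = B := by field_simp
  rw [this] at key
  linarith

/-- If `0 ≤ y ≤ K` and `u` is bounded away from zero and infinity, the distance `d(y, u)` is a
combination of four convergent integrals. -/
lemma KL_eq {ν : Measure α} [IsFiniteMeasure ν] {y u : α → ℝ} {l L K : ℝ} (hy : Integrable y ν)
    (hy0 : 0 ≤ᵐ[ν] y) (hyK : ∀ᵐ s ∂ν, y s ≤ K) (hu : Integrable u ν) (hl : 0 < l)
    (hb : ∀ᵐ s ∂ν, l ≤ u s ∧ u s ≤ L) :
    KL ν y u = ∫ s, y s * Real.log (y s) ∂ν - ∫ s, y s * Real.log (u s) ∂ν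
      - ∫ s, y s ∂ν + ∫ s, u s ∂ν := by
  have i1 : Integrable (fun s => y s * Real.log (y s)) ν := by
    obtain ⟨D, hD⟩ := (isCompact_Icc (a := (0 : ℝ)) (b := K)).exists_bound_of_continuousOn
      Real.continuous_mul_log.continuousOn
    refine Integrable.of_bound
      (Real.continuous_mul_log.comp_aestronglyMeasurable hy.aestronglyMeasurable) D ?_
    filter_upwards [hy0, hyK] with s h0 h1
    exact hD _ ⟨h0, h1⟩
  have i2 := integrable_mul_log hy hu.aestronglyMeasurable hl hb
  have i3 : Integrable (fun s => y s * Real.log (y s) - y s * Real.log (u s)) ν := i1.sub i2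
  have i4 : Integrable (fun s => y s * Real.log (y s) - y s * Real.log (u s) - y s) ν := i3.sub hy
  unfold KL
  rw [← integral_sub i1 i2, ← integral_sub i3 hy, ← integral_add i4 hu]
  refine integral_congr_ae ?_
  filter_upwards [hb] with s hs
  have hu0 : u s ≠ 0 := (hl.trans_le hs.1).ne'
  -- At `y s = 0` both sides reduce to `u s`, by the factor `y s` in front of the logarithms.
  by_cases h : y s = 0
  · simp [h]
  · simp only [Real.log_div h hu0]
    ring

/-- The EM step for a kernel on a product of finite measure spaces. -/
lemma em_core (ν : Measure α) (μ : Measure β) [IsFiniteMeasure ν] [IsFiniteMeasure μ]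
    (a : α → β → ℝ) (ha : Measurable (Function.uncurry a)) {m M K : ℝ} (hm : 0 < m) (hM : 0 < M)
    (hA2 : ∀ᵐ s ∂ν, ∀ᵐ t ∂μ, m ≤ a s t ∧ a s t ≤ M)
    (hA1 : ∀ᵐ t ∂μ, ∫ s, a s t ∂ν = 1)
    {y : α → ℝ} (hy : Integrable y ν) (hy0 : 0 ≤ᵐ[ν] y) (hy1 : ∫ s, y s ∂ν = 1)
    (hyK : ∀ᵐ s ∂ν, y s ≤ K)
    {x : β → ℝ} (hx : Integrable x μ) (hx0 : 0 ≤ᵐ[μ] x) (hx1 : ∫ t, x t ∂μ = 1)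
    {b c : α → ℝ} {h P : β → ℝ} (hbdef : b = fun s => ∫ t, a s t * x t ∂μ)
    (hhdef : h = fun t => ∫ s, a s t * (y s / b s) ∂ν)
    (hPdef : P = fun t => x t * h t) (hcdef : c = fun s => ∫ t, a s t * P t ∂μ) :
    (Integrable P μ ∧ 0 ≤ᵐ[μ] P ∧ ∫ t, P t ∂μ = 1) ∧ KL μ P x ≤ KL ν y b - KL ν y c := by
  have hms : MeasurableSet {p : α × β | m ≤ a p.1 p.2 ∧ a p.1 p.2 ≤ M} :=
    (measurableSet_le measurable_const ha).inter (measurableSet_le ha measurable_const)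
  have hA2p : ∀ᵐ p ∂(ν.prod μ), m ≤ a p.1 p.2 ∧ a p.1 p.2 ≤ M :=
    (Measure.ae_prod_iff_ae_ae hms).2 hA2
  have hA2' : ∀ᵐ t ∂μ, ∀ᵐ s ∂ν, m ≤ a s t ∧ a s t ≤ M := (Measure.ae_ae_comm hms).1 hA2
  have habs : ∀ᵐ p ∂(ν.prod μ), |a p.1 p.2| ≤ M := by
    filter_upwards [hA2p] with p hp
    rw [abs_of_nonneg (hm.le.trans hp.1)]
    exact hp.2
  have hrow : ∀ s, Measurable (a s) := fun s => ha.comp measurable_prodMk_left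
  have hcol : ∀ t, Measurable (fun s => a s t) := fun t => ha.comp measurable_prodMk_right
  have A_facts : ∀ f : β → ℝ, Integrable f μ → 0 ≤ᵐ[μ] f → ∫ t, f t ∂μ = 1 →
      Integrable (fun s => ∫ t, a s t * f t ∂μ) ν ∧
      (∀ᵐ s ∂ν, m ≤ ∫ t, a s t * f t ∂μ ∧ ∫ t, a s t * f t ∂μ ≤ M) ∧
      ∫ s, ∫ t, a s t * f t ∂μ ∂ν = 1 := by
    intro f hf hf0 hf1
    obtain ⟨q1, -, q3⟩ := integral_mul_duality ha habs (integrable_const (1 : ℝ)) hf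
    simp only [one_mul, mul_one] at q1 q3
    refine ⟨q1, ?_, ?_⟩
    · filter_upwards [hA2] with s hs
      have := integral_mul_bounds (hrow s) hm hs hf hf0
      rwa [hf1, mul_one, mul_one] at this
    · rw [q3, ← hf1]
      refine integral_congr_ae ?_
      filter_upwards [hA1] with t ht
      rw [ht, mul_one]
  obtain ⟨bi, bb, b1⟩ := A_facts x hx hx0 hx1
  change ∫ s, (fun s => ∫ t, a s t * x t ∂μ) s ∂ν = 1 at b1
  rw [← hbdef] at bi b1
  replace bb : ∀ᵐ s ∂ν, m ≤ b s ∧ b s ≤ M := by rw [hbdef]; exact bb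
  have gi : Integrable (fun s => y s / b s) ν := by
    simp only [div_eq_mul_inv]
    refine hy.mul_bdd (c := m⁻¹) bi.aestronglyMeasurable.aemeasurable.inv.aestronglyMeasurable ?_
    filter_upwards [bb] with s hs
    rw [norm_inv, Real.norm_eq_abs, abs_of_nonneg (hm.le.trans hs.1)]
    exact inv_anti₀ hm hs.1
  have g0 : 0 ≤ᵐ[ν] fun s => y s / b s := by
    filter_upwards [hy0, bb] with s h0 hs
    exact div_nonneg h0 (hm.le.trans hs.1)
  have glow : 1 / M ≤ ∫ s, y s / b s ∂ν := by
    rw [← hy1, ← integral_div]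
    refine integral_mono_ae (hy.div_const M) gi ?_
    filter_upwards [hy0, bb] with s h0 hs
    exact div_le_div_of_nonneg_left h0 (hm.trans_le hs.1) hs.2
  have hi : Integrable h μ := by
    obtain ⟨-, q2, -⟩ := integral_mul_duality ha habs gi (integrable_const (1 : ℝ))
    simpa only [one_mul, ← hhdef] using q2
  have hb : ∀ᵐ t ∂μ, m * (1 / M) ≤ h t ∧ h t ≤ M * ∫ s, y s / b s ∂ν := by
    filter_upwards [hA2'] with t ht
    have := integral_mul_bounds (hcol t) hm ht gi g0
    rw [hhdef]
    exact ⟨(mul_le_mul_of_nonneg_left glow hm.le).trans this.1, this.2⟩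
  have hl : 0 < m * (1 / M) := by positivity
  have hpos : ∀ᵐ t ∂μ, 0 < h t := hb.mono fun t ht => hl.trans_le ht.1
  obtain ⟨-, Pi', Pe⟩ := integral_mul_duality ha habs gi hx
  have Pint : Integrable P μ := by
    rw [hPdef, hhdef]; exact Pi'
  have P0 : 0 ≤ᵐ[μ] P := by
    filter_upwards [hx0, hpos] with t h0 h1
    rw [hPdef]
    exact mul_nonneg h0 h1.le
  have P1 : ∫ t, P t ∂μ = 1 := by
    rw [hPdef, hhdef]
    refine Pe.symm.trans ?_
    rw [← hy1]
    refine integral_congr_ae ?_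
    filter_upwards [bb] with s hs
    have e : ∫ t, a s t * x t ∂μ = b s := by rw [hbdef]
    have : b s ≠ 0 := (hm.trans_le hs.1).ne'
    rw [e, div_mul_cancel₀ _ this]
  refine ⟨⟨Pint, P0, P1⟩, ?_⟩
  obtain ⟨ci, cb, c1⟩ := A_facts P Pint P0 P1
  change ∫ s, (fun s => ∫ t, a s t * P t ∂μ) s ∂ν = 1 at c1
  rw [← hcdef] at ci c1
  replace cb : ∀ᵐ s ∂ν, m ≤ c s ∧ c s ≤ M := by rw [hcdef]; exact cb
  have xl : Integrable (fun t => x t * Real.log (h t)) μ :=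
    integrable_mul_log hx hi.aestronglyMeasurable hl hb
  have Pl : Integrable (fun t => P t * Real.log (h t)) μ :=
    integrable_mul_log Pint hi.aestronglyMeasurable hl hb
  have lhs : KL μ P x = ∫ t, P t * Real.log (h t) ∂μ := by
    have : KL μ P x = ∫ t, (P t * Real.log (h t) - P t + x t) ∂μ := by
      refine integral_congr_ae (Eventually.of_forall fun t => ?_)
      -- Where `x t = 0` also `P t = 0`, so the junk value of `P t / x t` is harmless.
      by_cases h0 : x t = 0
      · simp [hPdef, h0]
      · simp [hPdef, mul_div_cancel_left₀ _ h0]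
    have PlP : Integrable (fun t => P t * Real.log (h t) - P t) μ := Pl.sub Pint
    rw [this, integral_add PlP hx, integral_sub Pl Pint, P1, hx1]
    ring
  obtain ⟨d1, -, d3⟩ := integral_mul_duality ha habs gi xl
  have lhs' : ∫ t, P t * Real.log (h t) ∂μ =
      ∫ s, y s / b s * ∫ t, a s t * (x t * Real.log (h t)) ∂μ ∂ν := by
    rw [d3]
    refine integral_congr_ae (Eventually.of_forall fun t => ?_)
    have e : ∫ s, a s t * (y s / b s) ∂ν = h t := by rw [hhdef]
    simp only [e, hPdef]
    ring
  have yb := integrable_mul_log hy bi.aestronglyMeasurable hm bb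
  have yc := integrable_mul_log hy ci.aestronglyMeasurable hm cb
  rw [KL_eq hy hy0 hyK bi hm bb, KL_eq hy hy0 hyK ci hm cb, b1, c1, lhs, lhs']
  have main : ∫ s, y s / b s * ∫ t, a s t * (x t * Real.log (h t)) ∂μ ∂ν ≤
      ∫ s, (y s * Real.log (c s) - y s * Real.log (b s)) ∂ν := by
    refine integral_mono_ae d1 (yc.sub yb) ?_
    filter_upwards [hA2, bb, cb, g0, hy0] with s hs hbs hcs hgs hys
    have hbs0 : 0 < b s := hm.trans_le hbs.1
    have hcs0 : 0 < c s := hm.trans_le hcs.1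
    have rowb : ∀ᵐ t ∂μ, ‖a s t‖ ≤ M := by
      filter_upwards [hs] with t ht
      rw [Real.norm_eq_abs, abs_of_nonneg (hm.le.trans ht.1)]
      exact ht.2
    have rowi : ∀ f : β → ℝ, Integrable f μ → Integrable (fun t => a s t * f t) μ :=
      fun f hf => hf.bdd_mul (hrow s).aestronglyMeasurable rowb
    have eb : ∫ t, a s t * x t ∂μ = b s := by rw [hbdef]
    have ec : ∫ t, a s t * x t * h t ∂μ = c s := by
      rw [hcdef, hPdef]
      simp only [mul_assoc]
    have wh : Integrable (fun t => a s t * x t * h t) μ := by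
      have := rowi P Pint
      rw [hPdef] at this
      simpa only [mul_assoc] using this
    have wl : Integrable (fun t => a s t * x t * Real.log (h t)) μ := by
      simpa only [mul_assoc] using rowi _ xl
    have w0 : 0 ≤ᵐ[μ] fun t => a s t * x t := by
      filter_upwards [hs, hx0] with t ht h0
      exact mul_nonneg (hm.le.trans ht.1) h0
    have J := jensen_log (rowi x hx) w0 wh wl hpos (by rw [eb]; exact hbs0)
      (by rw [ec]; exact hcs0)
    rw [eb, ec, Real.log_div hcs0.ne' hbs0.ne'] at J
    simp only [mul_assoc] at J
    calc y s / b s * ∫ t, a s t * (x t * Real.log (h t)) ∂μ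
        ≤ y s / b s * (b s * (Real.log (c s) - Real.log (b s))) :=
          mul_le_mul_of_nonneg_left J hgs
      _ = y s * Real.log (c s) - y s * Real.log (b s) := by
          field_simp
  rw [integral_sub yc yb] at main
  linarith

end EMStep

/-- under (A1)-(A3), for `x ∈ Δ` and `j < N`, the EM update
`P_j(x) = x · A_j*( y_j / (A_j x) )` belongs to `Δ` and satisfies
`d(P_j(x), x) ≤ f_j(x) - f_j(P_j(x))`. -/
theorem em_step_in_delta_and_kl_bound
    {d : ℕ} (Ω S : Set (Fin d → ℝ))
    (hΩo : IsOpen Ω) (hΩb : Bornology.IsBounded Ω)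
    (hSo : IsOpen S) (hSb : Bornology.IsBounded S)
    (N : ℕ) (hN : 0 < N)
    (a : ℕ → (Fin d → ℝ) → (Fin d → ℝ) → ℝ)
    (y : ℕ → (Fin d → ℝ) → ℝ)
    (ha_meas : ∀ j < N, Measurable (Function.uncurry (a j)))
    (m M : ℝ) (hm : 0 < m)
    -- (A2)
    (hA2 : ∀ j < N, ∀ᵐ s ∂(volume.restrict S), ∀ᵐ t ∂(volume.restrict Ω),
      m ≤ a j s t ∧ a j s t ≤ M)
    -- (A1)
    (hA1 : ∀ j < N, ∀ᵐ t ∂(volume.restrict Ω), (∫ s in S, a j s t) = 1)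
    (M' : ℝ) (hM' : 0 < M')
    (hy_int : ∀ j < N, Integrable (y j) (volume.restrict S))
    -- (A3)
    (hA3 : ∀ j < N, (0 ≤ᵐ[volume.restrict S] y j) ∧ (∫ s in S, y j s) = 1 ∧
      (∀ᵐ s ∂(volume.restrict S), y j s ≤ M'))
    (x : (Fin d → ℝ) → ℝ) (hx : InDelta Ω x) (j : ℕ) (hj : j < N) :
    InDelta Ω (emStep Ω S (a j) (y j) x) ∧
    KL (volume.restrict Ω) (emStep Ω S (a j) (y j) x) x ≤
      KL (volume.restrict S) (y j) (opA Ω (a j) x) -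
      KL (volume.restrict S) (y j) (opA Ω (a j) (emStep Ω S (a j) (y j) x)) := by
  have : IsFiniteMeasure (volume.restrict Ω) :=
    isFiniteMeasure_restrict.2 hΩb.measure_lt_top.ne
  have : IsFiniteMeasure (volume.restrict S) :=
    isFiniteMeasure_restrict.2 hSb.measure_lt_top.ne
  obtain ⟨hx, hx0, hx1⟩ := hx
  obtain ⟨hy0, hy1, hyK⟩ := hA3 j hj
  -- Using `max M m` as upper bound makes its positivity immediate.
  have hA2' : ∀ᵐ s ∂(volume.restrict S), ∀ᵐ t ∂(volume.restrict Ω),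
      m ≤ a j s t ∧ a j s t ≤ max M m := by
    filter_upwards [hA2 j hj] with s hs
    filter_upwards [hs] with t ht
    exact ⟨ht.1, ht.2.trans (le_max_left _ _)⟩
  exact EMStep.em_core (volume.restrict S) (volume.restrict Ω) (a j) (ha_meas j hj) hm
    (lt_max_of_lt_right hm) hA2' (hA1 j hj) (hy_int j hj) hy0 hy1 hyK hx hx0 hx1 rfl rfl rfl rfl
end

section
/- Under assumptions (A1)-(A3), let x in \Delta, let j in {0,...,N-1}, and suppose x^* in \Delta is a minimizer of f_j with d(x^*, x) < \infty. Then d( x^*, P_j(x) ) < \infty and f_j(x) - f_j(x^*) <= d(x^*, x) - d( x^*, P_j(x) ), where P_j(x) := x \cdot A_j^*( y_j / (A_j x) ). -/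
/-!
Write `P` for the EM step and `g = A*(y / A x)` for its multiplier, so that `P x = x g`. As `A x`
is bounded above and away from `0` for `x ∈ Δ`, so is `g`; together with `P x ∈ Δ` this gives
finiteness of `d(x*, P x)` and `d(x*, x) - d(x*, P x) = ∫ x* log g`. It remains to bound this
integral from below by `f(x) - f(x*) = ∫ y log (A x* / A x)`.

Both halves of the argument are Jensen's inequality for `log` (`jensen_log`) followed by Fubini
(`KernelHyp.adjoint`).

* `KernelHyp.fixed_point`: Jensen in `t` gives the descent `f(z) - f(P z) ≥ d(P z, z)` for every
  `z ∈ Δ`. Since `P x* ∈ Δ`, minimality forces `d(P x*, x*) = 0`, that is `A*(y / A x*) = 1`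
  almost everywhere on `{x* ≠ 0}`. This replaces differentiating `f`.
* `KernelHyp.main_ineq`: for such `t`, `a(·,t) y / A x*` is a probability density on `S`, and `g(t)`
  is the mean of `A x* / A x` under it. Jensen in `s`, integrated against `x*`, is the claim.
-/

open MeasureTheory Real Filter

/-- The standing assumptions on one kernel `a`: measurability, the two-sided bound `m ≤ a ≤ M`
and the normalisation `∫_S a(s,t) ds = 1`, over sets of finite measure. -/
structure KernelHyp {d : ℕ} (Ω S : Set (Fin d → ℝ)) (a : (Fin d → ℝ) → (Fin d → ℝ) → ℝ)
    (m M : ℝ) : Prop where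
  finΩ : IsFiniteMeasure (volume.restrict Ω)
  finS : IsFiniteMeasure (volume.restrict S)
  meas : Measurable (Function.uncurry a)
  m_pos : 0 < m
  M_pos : 0 < M
  bd : ∀ᵐ s ∂(volume.restrict S), ∀ᵐ t ∂(volume.restrict Ω), m ≤ a s t ∧ a s t ≤ M
  mass : ∀ᵐ t ∂(volume.restrict Ω), (∫ s in S, a s t) = 1

/-! ### Weighted averages and Jensen's inequality for the logarithm -/

section generic

variable {α : Type*} [MeasurableSpace α] {μ : Measure α}

/-- A weighted average of a kernel lying in `[m, M]` lies between `m ∫ w` and `M ∫ w`. -/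
lemma weighted_bounds {k w : α → ℝ} {m M : ℝ} (hm : 0 < m) (hk : AEStronglyMeasurable k μ)
    (hb : ∀ᵐ s ∂μ, m ≤ k s ∧ k s ≤ M) (hw : Integrable w μ) (hw0 : 0 ≤ᵐ[μ] w) :
    Integrable (fun s => k s * w s) μ ∧
      m * ∫ s, w s ∂μ ≤ ∫ s, k s * w s ∂μ ∧ ∫ s, k s * w s ∂μ ≤ M * ∫ s, w s ∂μ := by
  have hi : Integrable (fun s => k s * w s) μ := by
    refine Integrable.bdd_mul (c := M) hw hk ?_
    filter_upwards [hb] with s hs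
    rw [Real.norm_eq_abs, abs_of_nonneg (hm.le.trans hs.1)]
    exact hs.2
  refine ⟨hi, ?_, ?_⟩
  · rw [← integral_const_mul]
    refine integral_mono_ae (hw.const_mul m) hi ?_
    filter_upwards [hb, hw0] with s hs h0
    exact mul_le_mul_of_nonneg_right hs.1 h0
  · rw [← integral_const_mul]
    refine integral_mono_ae hi (hw.const_mul M) ?_
    filter_upwards [hb, hw0] with s hs h0
    exact mul_le_mul_of_nonneg_right hs.2 h0

lemma abs_log_le_of_bounds {p q r : ℝ} (hp : 0 < p) (h1 : p ≤ r) (h2 : r ≤ q) :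
    |Real.log r| ≤ max |Real.log p| |Real.log q| := by
  have hr : 0 < r := hp.trans_le h1
  exact abs_le_max_abs_abs (Real.log_le_log hp h1) (Real.log_le_log hr h2)

lemma integrable_mul_log {w h : α → ℝ} {p q : ℝ} (hp : 0 < p) (hw : Integrable w μ)
    (hh : AEStronglyMeasurable h μ) (hb : ∀ᵐ s ∂μ, p ≤ h s ∧ h s ≤ q) :
    Integrable (fun s => w s * Real.log (h s)) μ := by
  refine Integrable.mul_bdd (c := max |Real.log p| |Real.log q|) hw
    (Real.measurable_log.comp_aemeasurable hh.aemeasurable).aestronglyMeasurable ?_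
  filter_upwards [hb] with s hs
  exact abs_log_le_of_bounds hp hs.1 hs.2

/-- Jensen's inequality for `log` against a probability density `w`, from the tangent-line bound
`log h ≤ log c + h / c - 1` at the mean value `c = ∫ w h`. -/
lemma jensen_log {w h : α → ℝ} {p q : ℝ} (hp : 0 < p) (hw : Integrable w μ) (hw0 : 0 ≤ᵐ[μ] w)
    (hw1 : ∫ s, w s ∂μ = 1) (hh : AEStronglyMeasurable h μ)
    (hb : ∀ᵐ s ∂μ, p ≤ h s ∧ h s ≤ q) :
    ∫ s, w s * Real.log (h s) ∂μ ≤ Real.log (∫ s, w s * h s ∂μ) := by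
  obtain ⟨hi', h1, -⟩ := weighted_bounds hp hh hb hw hw0
  simp only [mul_comm (h _)] at hi' h1
  rw [hw1, mul_one] at h1
  set c := ∫ s, w s * h s ∂μ with hc
  have hc0 : 0 < c := hp.trans_le h1
  have hR : Integrable (fun s => (Real.log c - 1) * w s + c⁻¹ * (w s * h s)) μ :=
    (hw.const_mul _).add (hi'.const_mul _)
  have key := integral_mono_ae (integrable_mul_log hp hw hh hb) hR (by
    filter_upwards [hw0, hb] with s h0 hs
    have hs0 : 0 < h s := hp.trans_le hs.1
    have := Real.log_le_sub_one_of_pos (div_pos hs0 hc0)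
    rw [Real.log_div hs0.ne' hc0.ne'] at this
    calc w s * Real.log (h s) ≤ w s * (Real.log c + (h s / c - 1)) :=
          mul_le_mul_of_nonneg_left (by linarith) h0
      _ = (Real.log c - 1) * w s + c⁻¹ * (w s * h s) := by ring)
  rw [integral_add (hw.const_mul _) (hi'.const_mul _), integral_const_mul, integral_const_mul,
    hw1, ← hc, inv_mul_cancel₀ hc0.ne'] at key
  linarith

/-- `u log u ≥ u - 1` on `u > 0`, with equality only at `u = 1`. -/
lemma mul_log_sub_add_nonneg {u : ℝ} (hu : 0 < u) :
    0 ≤ u * Real.log u - u + 1 ∧ (u * Real.log u - u + 1 = 0 → u = 1) := by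
  have hl : Real.log u⁻¹ = - Real.log u := Real.log_inv u
  constructor
  · have := Real.log_le_sub_one_of_pos (inv_pos.2 hu)
    rw [hl] at this
    have h2 := mul_le_mul_of_nonneg_left this hu.le
    rw [mul_sub, mul_inv_cancel₀ hu.ne'] at h2
    linarith
  · intro h
    by_contra hne
    have := Real.log_lt_sub_one_of_pos (inv_pos.2 hu) (by simpa using hne)
    rw [hl] at this
    have h2 := mul_lt_mul_of_pos_left this hu
    rw [mul_sub, mul_inv_cancel₀ hu.ne'] at h2
    linarith

lemma integral_sub_add {f g k : α → ℝ} (hf : Integrable f μ) (hg : Integrable g μ)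
    (hk : Integrable k μ) :
    ∫ s, (f s - g s + k s) ∂μ = ∫ s, f s ∂μ - ∫ s, g s ∂μ + ∫ s, k s ∂μ := by
  have h : Integrable (fun s => f s - g s) μ := hf.sub hg
  rw [integral_add h hk, integral_sub hf hg]

lemma integral_sub_sub_add {f g h k : α → ℝ} (hf : Integrable f μ) (hg : Integrable g μ)
    (hh : Integrable h μ) (hk : Integrable k μ) :
    ∫ s, (f s - g s - h s + k s) ∂μ =
      ∫ s, f s ∂μ - ∫ s, g s ∂μ - ∫ s, h s ∂μ + ∫ s, k s ∂μ := by
  have h' : Integrable (fun s => f s - g s) μ := hf.sub hg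
  rw [integral_sub_add h' hh hk, integral_sub hf hg]

end generic

/-! ### The operators `A` and `A*` -/

section kernel

variable {d : ℕ} {Ω S : Set (Fin d → ℝ)} {a : (Fin d → ℝ) → (Fin d → ℝ) → ℝ} {m M : ℝ}

lemma KernelHyp.bd_swap (K : KernelHyp Ω S a m M) :
    ∀ᵐ t ∂(volume.restrict Ω), ∀ᵐ s ∂(volume.restrict S), m ≤ a s t ∧ a s t ≤ M := by
  have := K.finΩ
  have := K.finS
  refine (Measure.ae_ae_comm ?_).1 K.bd
  exact (measurableSet_le measurable_const K.meas).inter (measurableSet_le K.meas measurable_const)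

lemma KernelHyp.integrable_prod (K : KernelHyp Ω S a m M) {w z : (Fin d → ℝ) → ℝ}
    (hw : Integrable w (volume.restrict S)) (hz : Integrable z (volume.restrict Ω)) :
    Integrable (fun p : (Fin d → ℝ) × (Fin d → ℝ) => a p.1 p.2 * (w p.1 * z p.2))
      ((volume.restrict S).prod (volume.restrict Ω)) := by
  have := K.finΩ
  have := K.finS
  refine Integrable.bdd_mul (c := M) (hw.mul_prod hz) K.meas.aestronglyMeasurable ?_
  have : ∀ᵐ p ∂((volume.restrict S).prod (volume.restrict Ω)),
      m ≤ Function.uncurry a p ∧ Function.uncurry a p ≤ M :=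
    (Measure.ae_prod_iff_ae_ae ((measurableSet_le measurable_const K.meas).inter
      (measurableSet_le K.meas measurable_const))).2 K.bd
  filter_upwards [this] with p hp
  change ‖Function.uncurry a p‖ ≤ M
  rw [Real.norm_eq_abs, abs_of_nonneg (K.m_pos.le.trans hp.1)]
  exact hp.2

/-- Duality `⟨w, A z⟩ = ⟨z, A* w⟩` (Fubini), with integrability of both sides. -/
lemma KernelHyp.adjoint (K : KernelHyp Ω S a m M) {w z : (Fin d → ℝ) → ℝ}
    (hw : Integrable w (volume.restrict S)) (hz : Integrable z (volume.restrict Ω)) :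
    Integrable (fun s => w s * opA Ω a z s) (volume.restrict S) ∧
    Integrable (fun t => z t * opAstar S a w t) (volume.restrict Ω) ∧
    ∫ s in S, w s * opA Ω a z s = ∫ t in Ω, z t * opAstar S a w t := by
  have := K.finΩ
  have := K.finS
  have hI := K.integrable_prod hw hz
  have e1 : (fun s => w s * opA Ω a z s) = fun s => ∫ t in Ω, a s t * (w s * z t) := by
    funext s
    rw [opA, ← integral_const_mul]
    congr 1; funext t; ring
  have e2 : (fun t => z t * opAstar S a w t) = fun t => ∫ s in S, a s t * (w s * z t) := by
    funext t
    rw [opAstar, ← integral_const_mul]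
    congr 1; funext s; ring
  refine ⟨?_, ?_, ?_⟩
  · rw [e1]; exact hI.integral_prod_left
  · rw [e2]; exact hI.integral_prod_right
  · rw [e1, e2]; exact integral_integral_swap (f := fun s t => a s t * (w s * z t)) hI

lemma KernelHyp.opA_bounds (K : KernelHyp Ω S a m M) {z : (Fin d → ℝ) → ℝ}
    (hz : Integrable z (volume.restrict Ω)) (hz0 : 0 ≤ᵐ[volume.restrict Ω] z) :
    ∀ᵐ s ∂(volume.restrict S), Integrable (fun t => a s t * z t) (volume.restrict Ω) ∧
      m * ∫ t in Ω, z t ≤ opA Ω a z s ∧ opA Ω a z s ≤ M * ∫ t in Ω, z t := by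
  filter_upwards [K.bd] with s hs
  exact weighted_bounds K.m_pos K.meas.of_uncurry_left.aestronglyMeasurable hs hz hz0

lemma KernelHyp.opAstar_bounds (K : KernelHyp Ω S a m M) {w : (Fin d → ℝ) → ℝ}
    (hw : Integrable w (volume.restrict S)) (hw0 : 0 ≤ᵐ[volume.restrict S] w) :
    ∀ᵐ t ∂(volume.restrict Ω), Integrable (fun s => a s t * w s) (volume.restrict S) ∧
      m * ∫ s in S, w s ≤ opAstar S a w t ∧ opAstar S a w t ≤ M * ∫ s in S, w s := by
  filter_upwards [K.bd_swap] with t ht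
  exact weighted_bounds K.m_pos K.meas.of_uncurry_right.aestronglyMeasurable ht hw hw0

lemma KernelHyp.opA_delta (K : KernelHyp Ω S a m M) {z : (Fin d → ℝ) → ℝ} (hz : InDelta Ω z) :
    ∀ᵐ s ∂(volume.restrict S), m ≤ opA Ω a z s ∧ opA Ω a z s ≤ M := by
  filter_upwards [K.opA_bounds hz.1 hz.2.1] with s hs
  rw [hz.2.2, mul_one, mul_one] at hs
  exact hs.2

lemma KernelHyp.integral_opA (K : KernelHyp Ω S a m M) {z : (Fin d → ℝ) → ℝ}
    (hz : InDelta Ω z) :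
    Integrable (opA Ω a z) (volume.restrict S) ∧ ∫ s in S, opA Ω a z s = 1 := by
  have := K.finS
  obtain ⟨h1, -, h3⟩ := K.adjoint (w := fun _ => 1) (integrable_const 1) hz.1
  simp only [one_mul] at h1 h3
  refine ⟨h1, ?_⟩
  rw [h3]
  refine Eq.trans (integral_congr_ae ?_) hz.2.2
  filter_upwards [K.mass] with t ht
  simp [opAstar, ht]

lemma KernelHyp.opAstar_meas (K : KernelHyp Ω S a m M) {w : (Fin d → ℝ) → ℝ}
    (hw : Integrable w (volume.restrict S)) :
    AEStronglyMeasurable (opAstar S a w) (volume.restrict Ω) := by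
  have := K.finΩ
  have h := (K.adjoint hw (z := fun _ => 1) (integrable_const 1)).2.1.aestronglyMeasurable
  simpa only [one_mul] using h

/-! ### The EM multiplier and the objective on `Δ` -/

/-- The data `y`: a bounded probability density on `S`. -/
structure DataHyp {d : ℕ} (S : Set (Fin d → ℝ)) (y : (Fin d → ℝ) → ℝ) (M' : ℝ) : Prop where
  int : Integrable y (volume.restrict S)
  nonneg : 0 ≤ᵐ[volume.restrict S] y
  one : ∫ s in S, y s = 1
  le : ∀ᵐ s ∂(volume.restrict S), y s ≤ M'

variable {y : (Fin d → ℝ) → ℝ} {M' : ℝ}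

lemma KernelHyp.ratio (K : KernelHyp Ω S a m M) (Y : DataHyp S y M') {z : (Fin d → ℝ) → ℝ}
    (hz : InDelta Ω z) :
    Integrable (fun s => y s / opA Ω a z s) (volume.restrict S) ∧
    (0 ≤ᵐ[volume.restrict S] fun s => y s / opA Ω a z s) ∧
    M⁻¹ ≤ ∫ s in S, y s / opA Ω a z s ∧ ∫ s in S, y s / opA Ω a z s ≤ m⁻¹ := by
  have hA := K.opA_delta hz
  have hb : ∀ᵐ s ∂(volume.restrict S), M⁻¹ ≤ (opA Ω a z s)⁻¹ ∧ (opA Ω a z s)⁻¹ ≤ m⁻¹ := by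
    filter_upwards [hA] with s hs
    exact ⟨inv_anti₀ (K.m_pos.trans_le hs.1) hs.2, inv_anti₀ K.m_pos hs.1⟩
  have hmeas := ((K.integral_opA hz).1.aestronglyMeasurable.aemeasurable.inv).aestronglyMeasurable
  have := weighted_bounds (inv_pos.2 K.M_pos) hmeas hb Y.int Y.nonneg
  rw [Y.one, mul_one, mul_one] at this
  have e : (fun s => y s / opA Ω a z s) = fun s => (opA Ω a z)⁻¹ s * y s := by
    funext s; rw [Pi.inv_apply, div_eq_inv_mul]
  rw [e]
  refine ⟨this.1, ?_, this.2⟩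
  filter_upwards [hA, Y.nonneg] with s hs h0
  exact mul_nonneg (inv_nonneg.2 (K.m_pos.le.trans hs.1)) h0

/-- The EM multiplier `g = A*(y / A z)` is bounded away from `0` and from above. -/
lemma KernelHyp.multiplier_bounds (K : KernelHyp Ω S a m M) (Y : DataHyp S y M')
    {z : (Fin d → ℝ) → ℝ} (hz : InDelta Ω z) :
    ∀ᵐ t ∂(volume.restrict Ω), m * M⁻¹ ≤ opAstar S a (fun s => y s / opA Ω a z s) t ∧
      opAstar S a (fun s => y s / opA Ω a z s) t ≤ M * m⁻¹ := by
  obtain ⟨h1, h2, h3, h4⟩ := K.ratio Y hz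
  filter_upwards [K.opAstar_bounds h1 h2] with t ht
  exact ⟨(mul_le_mul_of_nonneg_left h3 K.m_pos.le).trans ht.2.1,
    ht.2.2.trans (mul_le_mul_of_nonneg_left h4 K.M_pos.le)⟩

lemma KernelHyp.emStep_mem (K : KernelHyp Ω S a m M) (Y : DataHyp S y M')
    {z : (Fin d → ℝ) → ℝ} (hz : InDelta Ω z) : InDelta Ω (emStep Ω S a y z) := by
  obtain ⟨h1, h2, -⟩ := K.ratio Y hz
  obtain ⟨-, h4, h5⟩ := K.adjoint h1 hz.1
  refine ⟨h4, ?_, ?_⟩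
  · filter_upwards [K.multiplier_bounds Y hz, hz.2.1] with t ht h0
    exact mul_nonneg h0 ((mul_pos K.m_pos (inv_pos.2 K.M_pos)).le.trans ht.1)
  · refine h5.symm.trans ?_
    rw [← Y.one]
    refine integral_congr_ae ?_
    filter_upwards [K.opA_delta hz] with s hs
    exact div_mul_cancel₀ _ (K.m_pos.trans_le hs.1).ne'

/-- Differences of the objective only involve `∫ y (log A z₂ - log A z₁)`, because both `A zᵢ` are
probability densities and the entropy of `y` is finite. -/
lemma KernelHyp.KL_sub (K : KernelHyp Ω S a m M) (Y : DataHyp S y M')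
    {z₁ z₂ : (Fin d → ℝ) → ℝ} (h₁ : InDelta Ω z₁) (h₂ : InDelta Ω z₂) :
    Integrable (fun s => y s * (Real.log (opA Ω a z₂ s) - Real.log (opA Ω a z₁ s)))
      (volume.restrict S) ∧
    KL (volume.restrict S) y (opA Ω a z₁) - KL (volume.restrict S) y (opA Ω a z₂) =
      ∫ s in S, y s * (Real.log (opA Ω a z₂ s) - Real.log (opA Ω a z₁ s)) := by
  have := K.finS
  have hE : Integrable (fun s => y s * Real.log (y s)) (volume.restrict S) := by
    obtain ⟨C, hC⟩ := (isCompact_Icc (a := (0 : ℝ)) (b := M')).exists_bound_of_continuousOn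
      Real.continuous_mul_log.continuousOn
    refine Integrable.of_bound (C := C)
      (Real.continuous_mul_log.comp_aestronglyMeasurable Y.int.aestronglyMeasurable) ?_
    filter_upwards [Y.nonneg, Y.le] with s h0 h1
    exact hC _ ⟨h0, h1⟩
  have hL : ∀ {z : (Fin d → ℝ) → ℝ}, InDelta Ω z →
      Integrable (fun s => y s * Real.log (opA Ω a z s)) (volume.restrict S) := fun hz =>
    integrable_mul_log K.m_pos Y.int (K.integral_opA hz).1.aestronglyMeasurable (K.opA_delta hz)
  have hKL : ∀ {z : (Fin d → ℝ) → ℝ}, InDelta Ω z → KL (volume.restrict S) y (opA Ω a z) =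
      (∫ s in S, y s * Real.log (y s)) - ∫ s in S, y s * Real.log (opA Ω a z s) := by
    intro z hz
    have e : KL (volume.restrict S) y (opA Ω a z) =
        ∫ s in S, (y s * Real.log (y s) - y s * Real.log (opA Ω a z s)) - y s + opA Ω a z s := by
      refine integral_congr_ae ?_
      filter_upwards [K.opA_delta hz] with s hs
      have hA : opA Ω a z s ≠ 0 := (K.m_pos.trans_le hs.1).ne'
      by_cases hy : y s = 0
      · simp [hy]
      · simp only [Real.log_div hy hA, mul_sub]
    rw [e, integral_sub_sub_add hE (hL hz) Y.int (K.integral_opA hz).1, Y.one, (K.integral_opA hz).2]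
    ring
  simp only [mul_sub]
  refine ⟨(hL h₂).sub (hL h₁), ?_⟩
  rw [hKL h₁, hKL h₂, integral_sub (hL h₂) (hL h₁)]
  ring

/-! ### Optimality and the descent estimate -/

/-- First-order optimality: a minimizer is a fixed point of the EM step. The step decreases the
objective by at least `d(P z, z)`, so this distance must vanish at a minimizer. -/
lemma KernelHyp.fixed_point (K : KernelHyp Ω S a m M) (Y : DataHyp S y M')
    {z : (Fin d → ℝ) → ℝ} (hz : InDelta Ω z)
    (hmin : KL (volume.restrict S) y (opA Ω a z) ≤
      KL (volume.restrict S) y (opA Ω a (emStep Ω S a y z))) :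
    ∀ᵐ t ∂(volume.restrict Ω), z t ≠ 0 → opAstar S a (fun s => y s / opA Ω a z s) t = 1 := by
  obtain ⟨hwi, hw0, -⟩ := K.ratio Y hz
  have hP := K.emStep_mem Y hz
  have hgb := K.multiplier_bounds Y hz
  have hgm := K.opAstar_meas hwi
  have hemz : ∀ t, emStep Ω S a y z t = z t * opAstar S a (fun s => y s / opA Ω a z s) t :=
    fun t => rfl
  set w := fun s => y s / opA Ω a z s with hw
  set g := opAstar S a w with hg
  have hp : 0 < m * M⁻¹ := mul_pos K.m_pos (inv_pos.2 K.M_pos)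
  have hzl : Integrable (fun t => z t * Real.log (g t)) (volume.restrict Ω) :=
    integrable_mul_log hp hz.1 hgm hgb
  obtain ⟨hi1, hi2, hadj⟩ := K.adjoint hwi hzl
  obtain ⟨hKi, hKe⟩ := K.KL_sub Y hz hP
  -- Jensen in the variable `t`, for the density `a(s,·) z / (A z)(s)`.
  have hJ : ∀ᵐ s ∂(volume.restrict S), w s * opA Ω a (fun t => z t * Real.log (g t)) s ≤
      y s * (Real.log (opA Ω a (emStep Ω S a y z) s) - Real.log (opA Ω a z s)) := by
    filter_upwards [K.bd, K.opA_bounds hz.1 hz.2.1, K.opA_delta hz, K.opA_delta hP, Y.nonneg]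
      with s hbs hbz hA hAP hy0
    have hA0 : 0 < opA Ω a z s := K.m_pos.trans_le hA.1
    have hAP0 : 0 < opA Ω a (emStep Ω S a y z) s := K.m_pos.trans_le hAP.1
    have hj := jensen_log (μ := volume.restrict Ω)
      (w := fun t => (opA Ω a z s)⁻¹ * (a s t * z t)) (h := g) hp (hbz.1.const_mul _)
      (by
        filter_upwards [hbs, hz.2.1] with t ht h0
        exact mul_nonneg (inv_nonneg.2 hA0.le) (mul_nonneg (K.m_pos.le.trans ht.1) h0))
      (by rw [integral_const_mul]; exact inv_mul_cancel₀ hA0.ne') hgm hgb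
    have e1 : ∫ t in Ω, (opA Ω a z s)⁻¹ * (a s t * z t) * Real.log (g t) =
        (opA Ω a z s)⁻¹ * opA Ω a (fun t => z t * Real.log (g t)) s := by
      rw [opA, opA, ← integral_const_mul]
      congr 1; funext t; ring
    have e2 : ∫ t in Ω, (opA Ω a z s)⁻¹ * (a s t * z t) * g t =
        opA Ω a (emStep Ω S a y z) s / opA Ω a z s := by
      rw [div_eq_inv_mul, opA, opA, ← integral_const_mul]
      congr 1; funext t; rw [hemz]; ring
    rw [e1, e2, Real.log_div hAP0.ne' hA0.ne'] at hj
    calc w s * opA Ω a (fun t => z t * Real.log (g t)) s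
        = y s * ((opA Ω a z s)⁻¹ * opA Ω a (fun t => z t * Real.log (g t)) s) := by
          simp only [hw]; ring
      _ ≤ _ := mul_le_mul_of_nonneg_left hj hy0
  have h1 := integral_mono_ae hi1 hKi hJ
  rw [hadj, ← hKe] at h1
  have hint : Integrable (fun t => z t * Real.log (g t) * g t - z t * g t + z t)
      (volume.restrict Ω) := (hi2.sub hP.1).add hz.1
  have heq : ∀ t, z t * Real.log (g t) * g t - z t * g t + z t =
      z t * (g t * Real.log (g t) - g t + 1) := fun t => by ring
  have hnn : 0 ≤ᵐ[volume.restrict Ω]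
      fun t => z t * Real.log (g t) * g t - z t * g t + z t := by
    filter_upwards [hz.2.1, hgb] with t h0 hgt
    simp only [Pi.zero_apply]
    rw [heq]
    exact mul_nonneg h0 (mul_log_sub_add_nonneg (hp.trans_le hgt.1)).1
  have hval : ∫ t in Ω, (z t * Real.log (g t) * g t - z t * g t + z t) ≤ 0 := by
    have hPo : ∫ t in Ω, z t * g t = 1 := hP.2.2
    have hPi : Integrable (fun t => z t * g t) (volume.restrict Ω) := hP.1
    rw [integral_sub_add hi2 hPi hz.1, hz.2.2, hPo]
    linarith
  have hzero := (integral_eq_zero_iff_of_nonneg_ae hnn hint).1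
    (le_antisymm hval (integral_nonneg_of_ae hnn))
  filter_upwards [hzero, hgb] with t ht hgt hzt
  simp only [Pi.zero_apply] at ht
  rw [heq] at ht
  exact (mul_log_sub_add_nonneg (hp.trans_le hgt.1)).2 ((mul_eq_zero.1 ht).resolve_left hzt)

/-- The heart of the estimate: `f(x) - f(x*) ≤ ∫ x* log A*(y / A x)`. Where `x* ≠ 0`, optimality
makes `a(·,t) y / (A x*)` a probability density, and Jensen's inequality applies in `s`. -/
lemma KernelHyp.main_ineq (K : KernelHyp Ω S a m M) (Y : DataHyp S y M')
    {x z : (Fin d → ℝ) → ℝ} (hx : InDelta Ω x) (hz : InDelta Ω z)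
    (hfix : ∀ᵐ t ∂(volume.restrict Ω), z t ≠ 0 →
      opAstar S a (fun s => y s / opA Ω a z s) t = 1) :
    Integrable (fun t => z t * Real.log (opAstar S a (fun s => y s / opA Ω a x s) t))
      (volume.restrict Ω) ∧
    KL (volume.restrict S) y (opA Ω a x) - KL (volume.restrict S) y (opA Ω a z) ≤
      ∫ t in Ω, z t * Real.log (opAstar S a (fun s => y s / opA Ω a x s) t) := by
  obtain ⟨hwi, hw0, -⟩ := K.ratio Y hz
  obtain ⟨hvi, hv0, -⟩ := K.ratio Y hx
  have hp : 0 < m * M⁻¹ := mul_pos K.m_pos (inv_pos.2 K.M_pos)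
  have hzl := integrable_mul_log hp hz.1 (K.opAstar_meas hvi) (K.multiplier_bounds Y hx)
  refine ⟨hzl, ?_⟩
  obtain ⟨hKi, hKe⟩ := K.KL_sub Y hx hz
  rw [hKe]
  have hq : 0 < m / M := div_pos K.m_pos K.M_pos
  -- The ratio `A x* / A x`, bounded between `m / M` and `M / m`.
  set h : (Fin d → ℝ) → ℝ := fun s => opA Ω a z s / opA Ω a x s with hh
  have hhb : ∀ᵐ s ∂(volume.restrict S), m / M ≤ h s ∧ h s ≤ M / m := by
    filter_upwards [K.opA_delta hx, K.opA_delta hz] with s h1 h2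
    exact ⟨div_le_div₀ (K.m_pos.le.trans h2.1) h2.1 (K.m_pos.trans_le h1.1) h1.2,
      div_le_div₀ K.M_pos.le h2.2 K.m_pos h1.1⟩
  have hhm : AEStronglyMeasurable h (volume.restrict S) :=
    ((K.integral_opA hz).1.aestronglyMeasurable.aemeasurable.div
      (K.integral_opA hx).1.aestronglyMeasurable.aemeasurable).aestronglyMeasurable
  have hlog : ∀ᵐ s ∂(volume.restrict S),
      Real.log (h s) = Real.log (opA Ω a z s) - Real.log (opA Ω a x s) := by
    filter_upwards [K.opA_delta hx, K.opA_delta hz] with s h1 h2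
    exact Real.log_div (K.m_pos.trans_le h2.1).ne' (K.m_pos.trans_le h1.1).ne'
  have hwl := integrable_mul_log hq hwi hhm hhb
  obtain ⟨hi1, hi2, hadj⟩ := K.adjoint hwl hz.1
  have e : ∫ s in S, y s * (Real.log (opA Ω a z s) - Real.log (opA Ω a x s)) =
      ∫ s in S, y s / opA Ω a z s * Real.log (h s) * opA Ω a z s := by
    refine integral_congr_ae ?_
    filter_upwards [hlog, K.opA_delta hz] with s hs h2
    have h0 : opA Ω a z s ≠ 0 := (K.m_pos.trans_le h2.1).ne'
    simp only [hs]
    field_simp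
  rw [e, hadj]
  refine integral_mono_ae hi2 hzl ?_
  filter_upwards [hfix, hz.2.1, K.bd_swap, K.opAstar_bounds hwi hw0] with t hft h0 hbt hbw
  by_cases hzt : z t = 0
  · simp [hzt]
  refine mul_le_mul_of_nonneg_left ?_ h0
  have hj := jensen_log (μ := volume.restrict S)
    (w := fun s => a s t * (y s / opA Ω a z s)) (h := h) hq hbw.1
    (by
      filter_upwards [hbt, hw0] with s hs h0
      exact mul_nonneg (K.m_pos.le.trans hs.1) h0)
    (hft hzt) hhm hhb
  have e1 : ∫ s in S, a s t * (y s / opA Ω a z s) * Real.log (h s) =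
      opAstar S a (fun s => y s / opA Ω a z s * Real.log (h s)) t := by
    rw [opAstar]
    congr 1; funext s; ring
  have e2 : ∫ s in S, a s t * (y s / opA Ω a z s) * h s =
      opAstar S a (fun s => y s / opA Ω a x s) t := by
    refine integral_congr_ae ?_
    filter_upwards [K.opA_delta hz] with s h2
    have h0 : opA Ω a z s ≠ 0 := (K.m_pos.trans_le h2.1).ne'
    simp only [hh]
    field_simp
  rwa [e1, e2] at hj

end kernel

/-! ### The distance to a minimizer -/

/-- under (A1)-(A3), if `x ∈ Δ`, `j < N` and `x* ∈ Δ` minimizes `f_j` over `Δ`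
with `d(x*, x) < ∞`, then `d(x*, P_j(x)) < ∞` and
`f_j(x) - f_j(x*) ≤ d(x*, x) - d(x*, P_j(x))`. -/
theorem em_step_minimizer_estimate
    {d : ℕ} (Ω S : Set (Fin d → ℝ))
    (hΩo : IsOpen Ω) (hΩb : Bornology.IsBounded Ω)
    (hSo : IsOpen S) (hSb : Bornology.IsBounded S)
    (N : ℕ) (hN : 0 < N)
    (a : ℕ → (Fin d → ℝ) → (Fin d → ℝ) → ℝ)
    (y : ℕ → (Fin d → ℝ) → ℝ)
    (ha_meas : ∀ j < N, Measurable (Function.uncurry (a j)))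
    (m M : ℝ) (hm : 0 < m)
    -- (A2)
    (hA2 : ∀ j < N, ∀ᵐ s ∂(volume.restrict S), ∀ᵐ t ∂(volume.restrict Ω),
      m ≤ a j s t ∧ a j s t ≤ M)
    -- (A1)
    (hA1 : ∀ j < N, ∀ᵐ t ∂(volume.restrict Ω), (∫ s in S, a j s t) = 1)
    (M' : ℝ) (hM' : 0 < M')
    (hy_int : ∀ j < N, Integrable (y j) (volume.restrict S))
    -- (A3)
    (hA3 : ∀ j < N, (0 ≤ᵐ[volume.restrict S] y j) ∧ (∫ s in S, y j s) = 1 ∧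
      (∀ᵐ s ∂(volume.restrict S), y j s ≤ M'))
    (x : (Fin d → ℝ) → ℝ) (hx : InDelta Ω x) (j : ℕ) (hj : j < N)
    (xstar : (Fin d → ℝ) → ℝ) (hxstar : InDelta Ω xstar)
    (hmin : ∀ w : (Fin d → ℝ) → ℝ, InDelta Ω w →
      KL (volume.restrict S) (y j) (opA Ω (a j) xstar) ≤
        KL (volume.restrict S) (y j) (opA Ω (a j) w))
    -- d(x*, x) < ∞
    (hfin : Integrable (fun t => xstar t * Real.log (xstar t / x t) - xstar t + x t)
      (volume.restrict Ω))
    (hfin' : ∀ᵐ t ∂(volume.restrict Ω), x t = 0 → xstar t = 0) :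
    (Integrable (fun t => xstar t * Real.log (xstar t / emStep Ω S (a j) (y j) x t) - xstar t +
        emStep Ω S (a j) (y j) x t) (volume.restrict Ω) ∧
      (∀ᵐ t ∂(volume.restrict Ω), emStep Ω S (a j) (y j) x t = 0 → xstar t = 0)) ∧
    KL (volume.restrict S) (y j) (opA Ω (a j) x) -
        KL (volume.restrict S) (y j) (opA Ω (a j) xstar) ≤
      KL (volume.restrict Ω) xstar x -
        KL (volume.restrict Ω) xstar (emStep Ω S (a j) (y j) x) := by
  obtain ⟨hy0, hy1, hyM⟩ := hA3 j hj
  have Y : DataHyp S (y j) M' := ⟨hy_int j hj, hy0, hy1, hyM⟩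
  have neS : volume.restrict S ≠ 0 := fun h => by simp [h] at hy1
  have neΩ : volume.restrict Ω ≠ 0 := fun h => by
    have := hx.2.2
    simp [h] at this
  have : (ae (volume.restrict S)).NeBot := ae_neBot.2 neS
  have : (ae (volume.restrict Ω)).NeBot := ae_neBot.2 neΩ
  have K : KernelHyp Ω S (a j) m M :=
    { finΩ := isFiniteMeasure_restrict.2 hΩb.measure_lt_top.ne
      finS := isFiniteMeasure_restrict.2 hSb.measure_lt_top.ne
      meas := ha_meas j hj
      m_pos := hm
      M_pos := by
        obtain ⟨s, hs⟩ := (hA2 j hj).exists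
        obtain ⟨t, ht⟩ := hs.exists
        linarith [ht.1, ht.2]
      bd := hA2 j hj
      mass := hA1 j hj }
  have hfix := K.fixed_point Y hxstar (hmin _ (K.emStep_mem Y hxstar))
  obtain ⟨hgi, hmain⟩ := K.main_ineq Y hx hxstar hfix
  have hP := K.emStep_mem Y hx
  have hgb := K.multiplier_bounds Y hx
  have hp : 0 < m * M⁻¹ := mul_pos K.m_pos (inv_pos.2 K.M_pos)
  have hem : ∀ t, emStep Ω S (a j) (y j) x t =
    x t * opAstar S (a j) (fun s => y j s / opA Ω (a j) x s) t := fun t => rfl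
  set g := opAstar S (a j) (fun s => y j s / opA Ω (a j) x s) with hg
  -- `d(x*, P x)` differs from `d(x*, x)` by integrable terms, since `log g` is bounded.
  have hae : (fun t => xstar t * Real.log (xstar t / emStep Ω S (a j) (y j) x t) - xstar t +
        emStep Ω S (a j) (y j) x t) =ᵐ[volume.restrict Ω]
      fun t => (xstar t * Real.log (xstar t / x t) - xstar t + x t)
        - xstar t * Real.log (g t) - x t + emStep Ω S (a j) (y j) x t := by
    filter_upwards [hgb, hfin'] with t ht h0
    have hgt : g t ≠ 0 := (hp.trans_le ht.1).ne'
    by_cases hs : xstar t = 0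
    · simp [hs]
    have hxt : x t ≠ 0 := fun h => hs (h0 h)
    have hl : Real.log (xstar t / emStep Ω S (a j) (y j) x t) =
        Real.log (xstar t / x t) - Real.log (g t) := by
      rw [hem, ← div_div, Real.log_div (div_ne_zero hs hxt) hgt]
    rw [hl]
    ring
  have hi := ((hfin.sub hgi).sub hx.1).add hP.1
  refine ⟨⟨hi.congr hae.symm, ?_⟩, ?_⟩
  · filter_upwards [hgb, hfin'] with t ht h0 he
    rw [hem] at he
    exact h0 ((mul_eq_zero.1 he).resolve_right (hp.trans_le ht.1).ne')
  · have hKL : KL (volume.restrict Ω) xstar (emStep Ω S (a j) (y j) x) =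
        KL (volume.restrict Ω) xstar x - ∫ t in Ω, xstar t * Real.log (g t) := by
      rw [KL, integral_congr_ae hae, integral_sub_sub_add hfin hgi hx.1 hP.1,
        hx.2.2, hP.2.2, KL]
      ring
    rw [hKL]
    linarith
end

section
/- Under assumptions (A1)-(A3), if x^* in \Delta is a solution of the system A_j x = y_j (j = 0,...,N-1) with d(x^*, x_0) < \infty, then the OS-EM iterates x_k satisfy, for every k in N, f_{[k]}( x_k ) <= d( x^*, x_k ) - d( x^*, x_{k+1} ), where [k] = k mod N. -/
/-!
The one-step decay of `d(x*, ·)` is Jensen's inequality followed by Fubini. Write `w = y / (A x)` and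
`g = A* w`, so that the EM step is `x' = x g`. Both `x` and `x'` have mass one, hence
`d(x*, x) - d(x*, x') = ∫ x* log g`. By (A1), `K(·, t)` is a probability density, so concavity of the
logarithm gives `log g(t) ≥ ∫ K(s, t) log w(s) ds`. Integrating against `x*` and exchanging the
integrals turns the right-hand side into `∫ (A x*) log w = ∫ y log (y / (A x)) = d(y, A x)`.

The bounds (A2) keep `A x`, `y = A x*`, `w` and `g` between positive constants. Therefore `log w`
and `log g` are bounded, which makes every integral above a genuine one and propagates
`d(x*, x_k) < ∞` and the inclusion of supports along the iteration. The lemmas are stated for a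
kernel `K : β → α → ℝ` between finite measure spaces; `em_step` is the one-step statement.
-/

open MeasureTheory Real Filter

/-! ### Kernel integrals: bounds, duality, Jensen -/

section Kernel

variable {α β : Type*} [MeasurableSpace α] [MeasurableSpace β]

/-- Averaging a function with values in `[m, M]` against a nonnegative weight of mass `∫ u`. -/
lemma bounds_integral_mul (μ : Measure α) {m M : ℝ} {k u : α → ℝ}
    (hk : AEStronglyMeasurable k μ) (hb : ∀ᵐ t ∂μ, m ≤ k t ∧ k t ≤ M)
    (hu : Integrable u μ) (hu0 : 0 ≤ᵐ[μ] u) :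
    m * ∫ t, u t ∂μ ≤ ∫ t, k t * u t ∂μ ∧ ∫ t, k t * u t ∂μ ≤ M * ∫ t, u t ∂μ := by
  have hi : Integrable (fun t => k t * u t) μ := by
    refine hu.bdd_mul (c := max |m| |M|) hk ?_
    filter_upwards [hb] with t ht
    exact abs_le_max_abs_abs ht.1 ht.2
  rw [← integral_const_mul, ← integral_const_mul]
  constructor
  · refine integral_mono_ae (hu.const_mul m) hi ?_
    filter_upwards [hb, hu0] with t ht h0
    exact mul_le_mul_of_nonneg_right ht.1 h0
  · refine integral_mono_ae hi (hu.const_mul M) ?_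
    filter_upwards [hb, hu0] with t ht h0
    exact mul_le_mul_of_nonneg_right ht.2 h0

lemma integrable_kernel_mul (μ : Measure α) (ν : Measure β) [IsFiniteMeasure μ] [IsFiniteMeasure ν]
    {m M : ℝ} {K : β → α → ℝ} (hK : Measurable (Function.uncurry K))
    (hb : ∀ᵐ p ∂(ν.prod μ), m ≤ K p.1 p.2 ∧ K p.1 p.2 ≤ M)
    {u : α → ℝ} {w : β → ℝ} (hu : Integrable u μ) (hw : Integrable w ν) :
    Integrable (fun p : β × α => K p.1 p.2 * (w p.1 * u p.2)) (ν.prod μ) := by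
  refine (hw.mul_prod hu).bdd_mul (c := max |m| |M|) hK.aestronglyMeasurable ?_
  filter_upwards [hb] with p hp
  exact abs_le_max_abs_abs hp.1 hp.2

/-- The duality `⟨u, A* w⟩ = ⟨w, A u⟩`. -/
lemma kernel_duality (μ : Measure α) (ν : Measure β) [IsFiniteMeasure μ] [IsFiniteMeasure ν]
    {m M : ℝ} {K : β → α → ℝ} (hK : Measurable (Function.uncurry K))
    (hb : ∀ᵐ p ∂(ν.prod μ), m ≤ K p.1 p.2 ∧ K p.1 p.2 ≤ M)
    {u : α → ℝ} {w : β → ℝ} (hu : Integrable u μ) (hw : Integrable w ν) :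
    ∫ t, u t * (∫ s, K s t * w s ∂ν) ∂μ = ∫ s, w s * (∫ t, K s t * u t ∂μ) ∂ν := by
  have h := integrable_kernel_mul μ ν hK hb hu hw
  calc ∫ t, u t * (∫ s, K s t * w s ∂ν) ∂μ
      = ∫ t, ∫ s, K s t * (w s * u t) ∂ν ∂μ := by
        congr 1; ext t
        rw [← integral_const_mul]
        congr 1; ext s; ring
    _ = ∫ s, ∫ t, K s t * (w s * u t) ∂μ ∂ν :=
        (integral_integral_swap (f := fun s t => K s t * (w s * u t)) h).symm
    _ = ∫ s, w s * (∫ t, K s t * u t ∂μ) ∂ν := by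
        congr 1; ext s
        rw [← integral_const_mul]
        congr 1; ext t; ring

/-- Jensen's inequality for the logarithm and the probability density `k`, obtained by integrating
the tangent-line bound `log (w s) ≤ log g + w s / g - 1` at the mean `g = ∫ k w`. -/
lemma integral_mul_log_le (ν : Measure β) {k w : β → ℝ} (hk0 : 0 ≤ᵐ[ν] k) (hk : Integrable k ν)
    (hk1 : ∫ s, k s ∂ν = 1) (hw0 : ∀ᵐ s ∂ν, 0 < w s) (hkw : Integrable (fun s => k s * w s) ν)
    (hkl : Integrable (fun s => k s * Real.log (w s)) ν) (hg : 0 < ∫ s, k s * w s ∂ν) :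
    ∫ s, k s * Real.log (w s) ∂ν ≤ Real.log (∫ s, k s * w s ∂ν) := by
  set g := ∫ s, k s * w s ∂ν with hgdef
  have hi : Integrable (fun s => (Real.log g - 1) * k s + g⁻¹ * (k s * w s)) ν :=
    (hk.const_mul _).add (hkw.const_mul _)
  have h1 : ∫ s, k s * Real.log (w s) ∂ν
      ≤ ∫ s, ((Real.log g - 1) * k s + g⁻¹ * (k s * w s)) ∂ν := by
    refine integral_mono_ae hkl hi ?_
    filter_upwards [hk0, hw0] with s h0 hw
    have h2 := Real.log_le_sub_one_of_pos (div_pos hw hg)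
    rw [Real.log_div hw.ne' hg.ne'] at h2
    have h3 : Real.log (w s) ≤ Real.log g - 1 + g⁻¹ * w s := by
      rw [div_eq_inv_mul] at h2; linarith
    have h0' : 0 ≤ k s := h0
    have := mul_le_mul_of_nonneg_left h3 h0'
    calc k s * Real.log (w s) ≤ k s * (Real.log g - 1 + g⁻¹ * w s) := this
      _ = _ := by ring
  rw [integral_add (hk.const_mul _) (hkw.const_mul _), integral_const_mul, integral_const_mul, hk1,
    ← hgdef, inv_mul_cancel₀ hg.ne'] at h1
  linarith

lemma integrable_mul_log_s7 (μ : Measure α) {c C : ℝ} {f u : α → ℝ} (hc : 0 < c)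
    (hf : AEStronglyMeasurable f μ) (hb : ∀ᵐ t ∂μ, c ≤ f t ∧ f t ≤ C) (hu : Integrable u μ) :
    Integrable (fun t => u t * Real.log (f t)) μ := by
  refine hu.mul_bdd (c := max |Real.log c| |Real.log C|)
    (Real.measurable_log.comp_aemeasurable hf.aemeasurable).aestronglyMeasurable ?_
  filter_upwards [hb] with t ht
  exact abs_le_max_abs_abs (Real.log_le_log hc ht.1) (Real.log_le_log (hc.trans_le ht.1) ht.2)

lemma KL_eq_integral_mul_log (μ : Measure α) {v u : α → ℝ} (hv : Integrable v μ)
    (hu : Integrable u μ) (huv : ∫ t, v t ∂μ = ∫ t, u t ∂μ)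
    (hl : Integrable (fun t => v t * Real.log (v t / u t)) μ) :
    KL μ v u = ∫ t, v t * Real.log (v t / u t) ∂μ := by
  unfold KL
  have hd : Integrable (fun t => v t * Real.log (v t / u t) - v t) μ := hl.sub hv
  rw [integral_add hd hu, integral_sub hl hv, huv]
  ring

/-! ### One EM step -/

/-- `x ≥ 0` is a probability density with `xs = 0` a.e. where `x = 0` and with
`∫ xs log (xs / x)` absolutely convergent: the conditions preserved by the EM iteration. -/
def Admissible (μ : Measure α) (xs x : α → ℝ) : Prop :=
  Integrable x μ ∧ 0 ≤ᵐ[μ] x ∧ ∫ t, x t ∂μ = 1 ∧ (∀ᵐ t ∂μ, x t = 0 → xs t = 0) ∧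
    Integrable (fun t => xs t * Real.log (xs t / x t)) μ

/-- One EM step for a stochastic kernel bounded between positive constants preserves admissibility
and decreases `d(xs, ·)` by at least `d(y, A x)`, where `y = A xs`. -/
lemma em_step (μ : Measure α) (ν : Measure β) [IsFiniteMeasure μ] [IsFiniteMeasure ν]
    {m M : ℝ} {K : β → α → ℝ} (hK : Measurable (Function.uncurry K)) (hm : 0 < m)
    (hb : ∀ᵐ s ∂ν, ∀ᵐ t ∂μ, m ≤ K s t ∧ K s t ≤ M)
    (hA1 : ∀ᵐ t ∂μ, ∫ s, K s t ∂ν = 1)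
    {y : β → ℝ} (hy : Integrable y ν) (hy1 : ∫ s, y s ∂ν = 1)
    {xs x x' : α → ℝ} (hxs : Integrable xs μ) (hxs0 : 0 ≤ᵐ[μ] xs) (hxs1 : ∫ t, xs t ∂μ = 1)
    (hsol : (fun s => ∫ t, K s t * xs t ∂μ) =ᵐ[ν] y) (hx : Admissible μ xs x)
    (hx' : x' = fun t => x t * ∫ s, K s t * (y s / ∫ t, K s t * x t ∂μ) ∂ν) :
    Admissible μ xs x' ∧
      KL ν y (fun s => ∫ t, K s t * x t ∂μ) ≤ KL μ xs x - KL μ xs x' := by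
  obtain ⟨hxi, hx0, hx1, hsupp, hxl⟩ := hx
  have hset : MeasurableSet {p : β × α | m ≤ K p.1 p.2 ∧ K p.1 p.2 ≤ M} :=
    (measurableSet_le measurable_const hK).inter (measurableSet_le hK measurable_const)
  have hbp : ∀ᵐ p ∂(ν.prod μ), m ≤ K p.1 p.2 ∧ K p.1 p.2 ≤ M :=
    (Measure.ae_prod_iff_ae_ae hset).2 hb
  have hbt : ∀ᵐ t ∂μ, ∀ᵐ s ∂ν, m ≤ K s t ∧ K s t ≤ M :=
    (Measure.ae_ae_comm hset).1 hb
  have hKs : ∀ s, AEStronglyMeasurable (fun t => K s t) μ := fun s =>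
    (hK.comp measurable_prodMk_left).aestronglyMeasurable
  have hKt : ∀ t, AEStronglyMeasurable (fun s => K s t) ν := fun t =>
    (hK.comp measurable_prodMk_right).aestronglyMeasurable
  have hν : ν ≠ 0 := by
    rintro rfl
    simp at hy1
  set z : β → ℝ := fun s => ∫ t, K s t * x t ∂μ with hz
  set w : β → ℝ := fun s => y s / z s with hw
  set g : α → ℝ := fun t => ∫ s, K s t * w s ∂ν with hg
  have hzb : ∀ᵐ s ∂ν, m ≤ z s ∧ z s ≤ M := by
    filter_upwards [hb] with s hs
    simpa [hx1] using bounds_integral_mul μ (hKs s) hs hxi hx0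
  have hyb : ∀ᵐ s ∂ν, m ≤ y s ∧ y s ≤ M := by
    filter_upwards [hb, hsol] with s hs hys
    rw [← hys]
    simpa [hxs1] using bounds_integral_mul μ (hKs s) hs hxs hxs0
  have hM : 0 < M := by
    have : NeZero ν := ⟨hν⟩
    obtain ⟨s, h1, h2⟩ := hzb.exists
    linarith
  have hzi : Integrable z ν := by
    have h := (integrable_kernel_mul μ ν hK hbp hxi (integrable_const (1 : ℝ))).integral_prod_left
    simpa using h
  have hwb : ∀ᵐ s ∂ν, m / M ≤ w s ∧ w s ≤ M / m := by
    filter_upwards [hzb, hyb] with s h1 h2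
    have h3 : 0 < z s := hm.trans_le h1.1
    exact ⟨div_le_div₀ (hm.le.trans h2.1) h2.1 h3 h1.2, div_le_div₀ hM.le h2.2 hm h1.1⟩
  have hwm : AEStronglyMeasurable w ν :=
    (hy.aemeasurable.div hzi.aemeasurable).aestronglyMeasurable
  have hmM : 0 < m / M := div_pos hm hM
  have hw0 : ∀ᵐ s ∂ν, 0 < w s := hwb.mono fun s h => hmM.trans_le h.1
  have hwi : Integrable w ν := by
    refine Integrable.of_bound hwm (M / m) ?_
    filter_upwards [hwb, hw0] with s h1 h2
    rw [Real.norm_of_nonneg h2.le]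
    exact h1.2
  have hwpos : 0 < ∫ s, w s ∂ν := by
    have h : ∫ s, M⁻¹ * y s ∂ν ≤ ∫ s, w s ∂ν := by
      refine integral_mono_ae (hy.const_mul _) hwi ?_
      filter_upwards [hzb, hyb] with s h1 h2
      have h3 : 0 < z s := hm.trans_le h1.1
      rw [← div_eq_inv_mul]
      exact div_le_div_of_nonneg_left (hm.le.trans h2.1) h3 h1.2
    rw [integral_const_mul, hy1, mul_one] at h
    exact (inv_pos.2 hM).trans_le h
  set W := ∫ s, w s ∂ν with hW
  have hgb : ∀ᵐ t ∂μ, m * W ≤ g t ∧ g t ≤ M * W := by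
    filter_upwards [hbt] with t ht
    exact bounds_integral_mul ν (hKt t) ht hwi (hw0.mono fun s h => h.le)
  have hmW : 0 < m * W := mul_pos hm hwpos
  have hgm : AEStronglyMeasurable g μ := by
    have h := (integrable_kernel_mul μ ν hK hbp (integrable_const (1 : ℝ)) hwi).integral_prod_right
    simpa using h.aestronglyMeasurable
  have hx'i : Integrable x' μ := by
    rw [hx']
    refine hxi.mul_bdd (c := M * W) hgm ?_
    filter_upwards [hgb] with t ht
    rw [Real.norm_of_nonneg (hmW.le.trans ht.1)]
    exact ht.2
  have hx'1 : ∫ t, x' t ∂μ = 1 := by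
    rw [hx', kernel_duality μ ν hK hbp hxi hwi, ← hy1]
    refine integral_congr_ae ?_
    filter_upwards [hzb] with s hs
    exact div_mul_cancel₀ _ (hm.trans_le hs.1).ne'
  have hlg : Integrable (fun t => xs t * Real.log (g t)) μ := integrable_mul_log_s7 μ hmW hgm hgb hxs
  have hlog : ∀ᵐ t ∂μ, xs t * Real.log (xs t / x' t)
      = xs t * Real.log (xs t / x t) - xs t * Real.log (g t) := by
    filter_upwards [hsupp, hgb] with t h1 h2
    by_cases h : xs t = 0
    · simp [h]
    · have hxt : x t ≠ 0 := fun h' => h (h1 h')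
      have hgt : g t ≠ 0 := (hmW.trans_le h2.1).ne'
      have he : xs t / x' t = xs t / x t / g t := by
        rw [hx', div_div]
      rw [he, Real.log_div (div_ne_zero h hxt) hgt]
      ring
  have hx'l : Integrable (fun t => xs t * Real.log (xs t / x' t)) μ :=
    (hxl.sub hlg).congr (hlog.mono fun t h => h.symm)
  refine ⟨⟨hx'i, ?_, hx'1, ?_, hx'l⟩, ?_⟩
  · filter_upwards [hx0, hgb] with t h1 h2
    rw [hx']
    exact mul_nonneg h1 (hmW.le.trans h2.1)
  · filter_upwards [hsupp, hgb] with t h1 h2 h3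
    rw [hx'] at h3
    exact h1 ((mul_eq_zero.1 h3).resolve_right (hmW.trans_le h2.1).ne')
  have hlw : Integrable (fun s => Real.log (w s)) ν := by
    simpa using integrable_mul_log_s7 ν hmM hwm hwb (integrable_const (1 : ℝ))
  have hyl : Integrable (fun s => y s * Real.log (w s)) ν := integrable_mul_log_s7 ν hmM hwm hwb hy
  have hz1 : ∫ s, z s ∂ν = 1 := by
    have h := kernel_duality μ ν hK hbp hxi (integrable_const (1 : ℝ))
    simp only [mul_one, one_mul] at h
    rw [← h, ← hx1]
    refine integral_congr_ae ?_
    filter_upwards [hA1] with t ht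
    rw [ht, mul_one]
  rw [KL_eq_integral_mul_log μ hxs hxi (by rw [hxs1, hx1]) hxl,
    KL_eq_integral_mul_log μ hxs hx'i (by rw [hxs1, hx'1]) hx'l,
    KL_eq_integral_mul_log ν hy hzi (by rw [hy1, hz1]) hyl,
    integral_congr_ae hlog, integral_sub hxl hlg, sub_sub_cancel]
  have hdual := kernel_duality μ ν hK hbp hxs hlw
  have hyw : ∫ s, y s * Real.log (y s / z s) ∂ν
      = ∫ t, xs t * (∫ s, K s t * Real.log (w s) ∂ν) ∂μ := by
    rw [hdual]
    refine integral_congr_ae ?_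
    filter_upwards [hsol] with s hs
    rw [hs, mul_comm]
  rw [hyw]
  refine integral_mono_ae ?_ hlg ?_
  · have h := (integrable_kernel_mul μ ν hK hbp hxs hlw).integral_prod_right
    refine h.congr (Eventually.of_forall fun t => ?_)
    simp only
    rw [← integral_const_mul]
    congr 1; ext s; ring
  · filter_upwards [hxs0, hbt, hA1, hgb] with t h0 h1 h2 h3
    refine mul_le_mul_of_nonneg_left ?_ h0
    have hbd : ∀ᵐ s ∂ν, ‖K s t‖ ≤ max |m| |M| :=
      h1.mono fun s h => abs_le_max_abs_abs h.1 h.2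
    exact integral_mul_log_le ν (h1.mono fun s h => hm.le.trans h.1)
      (Integrable.of_bound (hKt t) _ hbd) h2 hw0 (hwi.bdd_mul (hKt t) hbd)
      (hlw.bdd_mul (hKt t) hbd) (hmW.trans_le h3.1)

end Kernel

/-! ### The OS-EM iteration -/

/-- under (A1)-(A3), if `x* ∈ Δ` solves `A_j x = y_j` for all `j < N` and
`d(x*, x_0) < ∞`, then the OS-EM iterates satisfy
`f_{[k]}(x_k) ≤ d(x*, x_k) - d(x*, x_{k+1})`. -/
theorem osem_residual_bound_by_kl_decay
    {d : ℕ} (Ω S : Set (Fin d → ℝ))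
    (hΩo : IsOpen Ω) (hΩb : Bornology.IsBounded Ω)
    (hSo : IsOpen S) (hSb : Bornology.IsBounded S)
    (N : ℕ) (hN : 0 < N)
    (a : ℕ → (Fin d → ℝ) → (Fin d → ℝ) → ℝ)
    (y : ℕ → (Fin d → ℝ) → ℝ)
    (ha_meas : ∀ j < N, Measurable (Function.uncurry (a j)))
    (m M : ℝ) (hm : 0 < m)
    -- (A2)
    (hA2 : ∀ j < N, ∀ᵐ s ∂(volume.restrict S), ∀ᵐ t ∂(volume.restrict Ω),
      m ≤ a j s t ∧ a j s t ≤ M)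
    -- (A1)
    (hA1 : ∀ j < N, ∀ᵐ t ∂(volume.restrict Ω), (∫ s in S, a j s t) = 1)
    (M' : ℝ) (hM' : 0 < M')
    (hy_int : ∀ j < N, Integrable (y j) (volume.restrict S))
    -- (A3)
    (hA3 : ∀ j < N, (0 ≤ᵐ[volume.restrict S] y j) ∧ (∫ s in S, y j s) = 1 ∧
      (∀ᵐ s ∂(volume.restrict S), y j s ≤ M'))
    -- the OS-EM iteration
    (x : ℕ → (Fin d → ℝ) → ℝ)
    (hx0 : InDelta Ω (x 0))
    (hiter : ∀ k, x (k + 1) = emStep Ω S (a (k % N)) (y (k % N)) (x k))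
    (xstar : (Fin d → ℝ) → ℝ) (hxstar : InDelta Ω xstar)
    (hxstar_sol : ∀ j < N, opA Ω (a j) xstar =ᵐ[volume.restrict S] y j)
    -- d(x*, x_0) < ∞
    (hfin : Integrable (fun t => xstar t * Real.log (xstar t / x 0 t) - xstar t + x 0 t)
      (volume.restrict Ω))
    (hfin' : ∀ᵐ t ∂(volume.restrict Ω), x 0 t = 0 → xstar t = 0) :
    ∀ k, KL (volume.restrict S) (y (k % N)) (opA Ω (a (k % N)) (x k)) ≤
      KL (volume.restrict Ω) xstar (x k) - KL (volume.restrict Ω) xstar (x (k + 1)) := by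
  have : IsFiniteMeasure (volume.restrict Ω) := ⟨by simpa using hΩb.measure_lt_top⟩
  have : IsFiniteMeasure (volume.restrict S) := ⟨by simpa using hSb.measure_lt_top⟩
  have hlt : ∀ k, k % N < N := fun k => Nat.mod_lt k hN
  have step : ∀ k, Admissible (volume.restrict Ω) xstar (x k) →
      Admissible (volume.restrict Ω) xstar (x (k + 1)) ∧
      KL (volume.restrict S) (y (k % N)) (opA Ω (a (k % N)) (x k)) ≤
        KL (volume.restrict Ω) xstar (x k) - KL (volume.restrict Ω) xstar (x (k + 1)) :=
    fun k hk => em_step _ _ (ha_meas _ (hlt k)) hm (hA2 _ (hlt k)) (hA1 _ (hlt k))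
      (hy_int _ (hlt k)) (hA3 _ (hlt k)).2.1 hxstar.1 hxstar.2.1 hxstar.2.2
      (hxstar_sol _ (hlt k)) hk (hiter k)
  have h0 : Admissible (volume.restrict Ω) xstar (x 0) := by
    refine ⟨hx0.1, hx0.2.1, hx0.2.2, hfin', ?_⟩
    refine ((hfin.add hxstar.1).sub hx0.1).congr (Eventually.of_forall fun t => ?_)
    simp only [Pi.add_apply, Pi.sub_apply]
    ring
  have hall : ∀ k, Admissible (volume.restrict Ω) xstar (x k) := by
    intro k
    induction k with
    | zero => exact h0
    | succ k ih => exact (step k ih).1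
  exact fun k => (step k (hall k)).2
end

section
/- Under assumptions (A1)-(A3), the OS-EM iterates x_k satisfy f_{[k]}( x_{k+1} ) <= f_{[k]}( x_k ) for every k in N, where [k] = k mod N. -/
/-!
For `x ∈ Δ` put `u = A x`, `w = A* (y / u)`, `x' = x w` and `u' = A x'`. Both `∫ u = ∫ x = 1` and
`∫ u' = ∫ x' = ∫ y = 1` (by Fubini, `IsBddKernel.integral_mul_intOp`), so `x'` is again in `Δ` and
`f (x) - f (x') = ∫ y log (u' / u)`. This is nonnegative
(`IsBddKernel.integral_mul_log_div_nonneg`): for fixed `s`, `u' s / u s` is the average of `w`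
against the probability density `t ↦ a s t * x t / u s`, so Jensen's inequality for the concave
function `log` bounds `log (u' s / u s)` below by the average of `log w`. Integrating against `y`
and using Fubini once more gives `∫ y log (u' / u) ≥ ∫ x w log w ≥ ∫ x (w - 1) = 0`.

All logarithms are harmless: `u` and `u'` take values in `[m, M]` and `w` in `[m / M, M / m]`,
almost everywhere.
-/

open MeasureTheory Real Filter

/-! ### Integral operators with bounded kernels -/

section Kernel

variable {α β : Type*} [MeasurableSpace α] [MeasurableSpace β]

/-- The integral operator with kernel `k`, mapping functions on `α` to functions on `β`. Its adjoint
is the same construction applied to `flip k`. -/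
noncomputable def intOp (μ : Measure α) (k : β → α → ℝ) (p : α → ℝ) : β → ℝ :=
  fun s => ∫ t, k s t * p t ∂μ

/-- A jointly measurable kernel with values almost everywhere in `[m, M]`, where `0 < m ≤ M`. -/
structure IsBddKernel (μ : Measure α) (ν : Measure β) (k : β → α → ℝ) (m M : ℝ) : Prop where
  pos : 0 < m
  le : m ≤ M
  meas : Measurable (Function.uncurry k)
  bdd : ∀ᵐ s ∂ν, ∀ᵐ t ∂μ, m ≤ k s t ∧ k s t ≤ M

/-- Probability densities with respect to `μ`. -/
structure IsDensity (μ : Measure α) (x : α → ℝ) : Prop where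
  int : Integrable x μ
  nonneg : 0 ≤ᵐ[μ] x
  one : ∫ t, x t ∂μ = 1

namespace IsBddKernel

variable {μ : Measure α} {ν : Measure β} {k : β → α → ℝ} {m M : ℝ}

lemma measurableSet_bdd (h : IsBddKernel μ ν k m M) :
    MeasurableSet {z : β × α | m ≤ k z.1 z.2 ∧ k z.1 z.2 ≤ M} := by
  have hm : Measurable fun z : β × α => k z.1 z.2 := h.meas
  exact (measurableSet_le measurable_const hm).inter (measurableSet_le hm measurable_const)

lemma integrable_slice (h : IsBddKernel μ ν k m M) {p : α → ℝ} (hp : Integrable p μ) :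
    ∀ᵐ s ∂ν, Integrable (fun t => k s t * p t) μ := by
  filter_upwards [h.bdd] with s hs
  refine hp.bdd_mul (c := M) h.meas.of_uncurry_left.aestronglyMeasurable ?_
  filter_upwards [hs] with t ht
  rw [Real.norm_of_nonneg (h.pos.le.trans ht.1)]
  exact ht.2

lemma intOp_bounds (h : IsBddKernel μ ν k m M) {p : α → ℝ} (hp : Integrable p μ)
    (hp0 : 0 ≤ᵐ[μ] p) :
    ∀ᵐ s ∂ν, m * ∫ t, p t ∂μ ≤ intOp μ k p s ∧ intOp μ k p s ≤ M * ∫ t, p t ∂μ := by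
  filter_upwards [h.bdd, h.integrable_slice hp] with s hs hi
  rw [← integral_const_mul, ← integral_const_mul]
  constructor
  · refine integral_mono_ae (hp.const_mul m) hi ?_
    filter_upwards [hs, hp0] with t ht h0
    exact mul_le_mul_of_nonneg_right ht.1 h0
  · refine integral_mono_ae hi (hp.const_mul M) ?_
    filter_upwards [hs, hp0] with t ht h0
    exact mul_le_mul_of_nonneg_right ht.2 h0

lemma intOp_mem (h : IsBddKernel μ ν k m M) {x : α → ℝ} (hx : IsDensity μ x) :
    ∀ᵐ s ∂ν, m ≤ intOp μ k x s ∧ intOp μ k x s ≤ M := by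
  simpa [hx.one] using h.intOp_bounds hx.int hx.nonneg

variable [IsFiniteMeasure μ] [IsFiniteMeasure ν]

lemma symm (h : IsBddKernel μ ν k m M) : IsBddKernel ν μ (flip k) m M where
  pos := h.pos
  le := h.le
  meas := h.meas.comp measurable_swap
  bdd := (Measure.ae_ae_comm (p := fun s t => m ≤ k s t ∧ k s t ≤ M) h.measurableSet_bdd).1 h.bdd

lemma integrable_prod (h : IsBddKernel μ ν k m M) {p : α → ℝ} {q : β → ℝ}
    (hp : Integrable p μ) (hq : Integrable q ν) :
    Integrable (fun z : β × α => k z.1 z.2 * (q z.1 * p z.2)) (ν.prod μ) := by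
  refine (hq.mul_prod hp).bdd_mul (c := M) h.meas.aestronglyMeasurable ?_
  filter_upwards [(Measure.ae_prod_iff_ae_ae h.measurableSet_bdd).2 h.bdd] with z hz
  rw [Real.norm_of_nonneg (h.pos.le.trans hz.1)]
  exact hz.2

lemma integrable_mul_intOp (h : IsBddKernel μ ν k m M) {p : α → ℝ} {q : β → ℝ}
    (hp : Integrable p μ) (hq : Integrable q ν) :
    Integrable (fun s => q s * intOp μ k p s) ν := by
  have := (h.integrable_prod hp hq).integral_prod_left
  simpa only [intOp, mul_left_comm (k _ _), integral_const_mul] using this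

/-- The operators with kernels `k` and `flip k` are adjoint to each other. -/
lemma integral_mul_intOp (h : IsBddKernel μ ν k m M) {p : α → ℝ} {q : β → ℝ}
    (hp : Integrable p μ) (hq : Integrable q ν) :
    ∫ s, q s * intOp μ k p s ∂ν = ∫ t, p t * intOp ν (flip k) q t ∂μ := by
  have hsw := integral_integral_swap (f := fun s t => k s t * (q s * p t))
    (h.integrable_prod hp hq)
  simp only [intOp, flip, ← integral_const_mul]
  refine Eq.trans ?_ (hsw.trans ?_)
  · simp only [mul_left_comm]
  · refine integral_congr_ae (ae_of_all _ fun t => integral_congr_ae (ae_of_all _ fun s => ?_))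
    change k s t * (q s * p t) = p t * (k s t * q s)
    ring

lemma integrable_intOp (h : IsBddKernel μ ν k m M) {p : α → ℝ} (hp : Integrable p μ) :
    Integrable (intOp μ k p) ν := by
  simpa using h.integrable_mul_intOp hp (integrable_const (1 : ℝ))

lemma integral_intOp (h : IsBddKernel μ ν k m M) (h1 : ∀ᵐ t ∂μ, ∫ s, k s t ∂ν = 1)
    {x : α → ℝ} (hx : IsDensity μ x) : ∫ s, intOp μ k x s ∂ν = 1 := by
  have h2 := h.integral_mul_intOp hx.int (integrable_const (1 : ℝ))
  simp only [one_mul] at h2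
  rw [h2]
  refine Eq.trans ?_ hx.one
  refine integral_congr_ae ?_
  filter_upwards [h1] with t ht
  simp [intOp, flip, ht]

/-! ### One EM step -/

lemma integrable_ratio (h : IsBddKernel μ ν k m M) {x : α → ℝ} (hx : IsDensity μ x)
    {y : β → ℝ} (hy : IsDensity ν y) : Integrable (fun s => y s / intOp μ k x s) ν := by
  simp only [div_eq_inv_mul]
  refine hy.int.bdd_mul (c := m⁻¹)
    (h.integrable_intOp hx.int).aestronglyMeasurable.aemeasurable.inv.aestronglyMeasurable ?_
  filter_upwards [h.intOp_mem hx] with s hs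
  rw [norm_inv, Real.norm_of_nonneg (h.pos.le.trans hs.1)]
  exact inv_anti₀ h.pos hs.1

/-- The multiplier of an EM step lies in `[m / M, M / m]`: it integrates `a / A x`, which lies in
this range, against the probability density `y`. -/
lemma multiplier_bounds (h : IsBddKernel μ ν k m M) {x : α → ℝ} (hx : IsDensity μ x)
    {y : β → ℝ} (hy : IsDensity ν y) :
    ∀ᵐ t ∂μ, m / M ≤ intOp ν (flip k) (fun s => y s / intOp μ k x s) t ∧
      intOp ν (flip k) (fun s => y s / intOp μ k x s) t ≤ M / m := by
  have hM : 0 < M := h.pos.trans_le h.le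
  have hi := h.integrable_ratio hx hy
  have hu := h.intOp_mem hx
  have h0 : 0 ≤ᵐ[ν] fun s => y s / intOp μ k x s := by
    filter_upwards [hu, hy.nonneg] with s hs hs0
    exact div_nonneg hs0 (h.pos.le.trans hs.1)
  have hlo : 1 / M ≤ ∫ s, y s / intOp μ k x s ∂ν := by
    rw [← hy.one, ← integral_div]
    refine integral_mono_ae (hy.int.div_const M) hi ?_
    filter_upwards [hu, hy.nonneg] with s hs hs0
    exact div_le_div_of_nonneg_left hs0 (h.pos.trans_le hs.1) hs.2
  have hhi : ∫ s, y s / intOp μ k x s ∂ν ≤ 1 / m := by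
    rw [← hy.one, ← integral_div]
    refine integral_mono_ae hi (hy.int.div_const m) ?_
    filter_upwards [hu, hy.nonneg] with s hs hs0
    exact div_le_div_of_nonneg_left hs0 h.pos hs.1
  filter_upwards [h.symm.intOp_bounds hi h0] with t ht
  constructor
  · calc m / M = m * (1 / M) := by ring
      _ ≤ _ := mul_le_mul_of_nonneg_left hlo h.pos.le
      _ ≤ _ := ht.1
  · calc _ ≤ _ := ht.2
      _ ≤ M * (1 / m) := mul_le_mul_of_nonneg_left hhi hM.le
      _ = M / m := by ring

/-- An EM step maps probability densities to probability densities. -/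
lemma isDensity_step (h : IsBddKernel μ ν k m M) {x : α → ℝ} (hx : IsDensity μ x)
    {y : β → ℝ} (hy : IsDensity ν y) :
    IsDensity μ
      (fun t => x t * intOp ν (flip k) (fun s => y s / intOp μ k x s) t) := by
  have hi := h.integrable_ratio hx hy
  have hw := h.multiplier_bounds hx hy
  have hmM : 0 < m / M := div_pos h.pos (h.pos.trans_le h.le)
  refine ⟨?_, ?_, ?_⟩
  · refine hx.int.mul_bdd (c := M / m) (h.symm.integrable_intOp hi).aestronglyMeasurable ?_
    filter_upwards [hw] with t ht
    rw [Real.norm_of_nonneg (hmM.le.trans ht.1)]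
    exact ht.2
  · filter_upwards [hw, hx.nonneg] with t ht h0
    exact mul_nonneg h0 (hmM.le.trans ht.1)
  · rw [← h.integral_mul_intOp hx.int hi, ← hy.one]
    refine integral_congr_ae ?_
    filter_upwards [h.intOp_mem hx] with s hs
    exact div_mul_cancel₀ _ (h.pos.trans_le hs.1).ne'

lemma integrable_mul_log_intOp (h : IsBddKernel μ ν k m M) {x : α → ℝ} (hx : IsDensity μ x)
    {y : β → ℝ} (hy : Integrable y ν) :
    Integrable (fun s => y s * Real.log (intOp μ k x s)) ν := by
  refine hy.mul_bdd (c := max |Real.log m| |Real.log M|)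
    (Real.measurable_log.comp_aemeasurable
      (h.integrable_intOp hx.int).aestronglyMeasurable.aemeasurable).aestronglyMeasurable ?_
  filter_upwards [h.intOp_mem hx] with s hs
  exact abs_le_max_abs_abs (Real.log_le_log h.pos hs.1)
    (Real.log_le_log (h.pos.trans_le hs.1) hs.2)

/-- The decrease of the Kullback-Leibler distance in one EM step, written as
`∫ y (log (A x') - log (A x))`, is nonnegative. -/
lemma integral_mul_log_div_nonneg (h : IsBddKernel μ ν k m M) {x : α → ℝ} (hx : IsDensity μ x)
    {y : β → ℝ} (hy : IsDensity ν y) :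
    0 ≤ ∫ s, y s * (Real.log (intOp μ k (fun t => x t *
        intOp ν (flip k) (fun s => y s / intOp μ k x s) t) s)
      - Real.log (intOp μ k x s)) ∂ν := by
  have hx' := h.isDensity_step hx hy
  have hw := h.multiplier_bounds hx hy
  have hq := h.integrable_ratio hx hy
  have hw_int := h.symm.integrable_intOp hq
  have hu := h.intOp_mem hx
  have hu' := h.intOp_mem hx'
  have hlog' := h.integrable_mul_log_intOp hx' hy.int
  have hlog := h.integrable_mul_log_intOp hx hy.int
  set u := intOp μ k x with hu_def
  set w := intOp ν (flip k) (fun s => y s / u s) with hw_def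
  set u' := intOp μ k (fun t => x t * w t) with hu'_def
  have hmM : 0 < m / M := div_pos h.pos (h.pos.trans_le h.le)
  have hxlog : Integrable (fun t => x t * Real.log (w t)) μ := by
    refine hx.int.mul_bdd (c := max |Real.log (m / M)| |Real.log (M / m)|)
      (Real.measurable_log.comp_aemeasurable
        hw_int.aestronglyMeasurable.aemeasurable).aestronglyMeasurable ?_
    filter_upwards [hw] with t ht
    exact abs_le_max_abs_abs (Real.log_le_log hmM ht.1)
      (Real.log_le_log (hmM.trans_le ht.1) ht.2)
  have hxwlog : Integrable (fun t => x t * Real.log (w t) * w t) μ := by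
    refine hxlog.mul_bdd (c := M / m) hw_int.aestronglyMeasurable ?_
    filter_upwards [hw] with t ht
    rw [Real.norm_of_nonneg (hmM.le.trans ht.1)]
    exact ht.2
  -- `z log z ≥ z - 1`, applied to `z = w t`
  have hent : 0 ≤ ∫ t, x t * Real.log (w t) * w t ∂μ := by
    have h0 : ∫ t, (x t * w t - x t) ∂μ = 0 := by
      rw [integral_sub hx'.int hx.int, hx'.one, hx.one, sub_self]
    rw [← h0]
    refine integral_mono_ae (hx'.int.sub hx.int) hxwlog ?_
    filter_upwards [hw, hx.nonneg] with t ht h0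
    have hwt : 0 < w t := hmM.trans_le ht.1
    have h1 : w t - 1 ≤ Real.log (w t) * w t := by
      have := mul_le_mul_of_nonneg_right (Real.one_sub_inv_le_log_of_pos hwt) hwt.le
      rwa [sub_mul, inv_mul_cancel₀ hwt.ne', one_mul] at this
    calc x t * w t - x t = x t * (w t - 1) := by ring
      _ ≤ x t * (Real.log (w t) * w t) := mul_le_mul_of_nonneg_left h1 h0
      _ = _ := by ring
  -- Jensen's inequality, from the tangent line bound `log (w / r) ≤ w / r - 1` at `r = u' s / u s`
  have hjensen : ∀ᵐ s ∂ν, intOp μ k (fun t => x t * Real.log (w t)) s ≤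
      u s * (Real.log (u' s) - Real.log (u s)) := by
    filter_upwards [hu, hu', h.bdd, h.integrable_slice hx.int, h.integrable_slice hx'.int,
      h.integrable_slice hxlog] with s hus hus' hk hi hi' hil
    have hup : 0 < u s := h.pos.trans_le hus.1
    have hup' : 0 < u' s := h.pos.trans_le hus'.1
    have hR : ∫ t, ((Real.log (u' s) - Real.log (u s) - 1) * (k s t * x t) +
        u s / u' s * (k s t * (x t * w t))) ∂μ =
        u s * (Real.log (u' s) - Real.log (u s)) := by
      rw [integral_add (hi.const_mul _) (hi'.const_mul _), integral_const_mul,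
        integral_const_mul]
      change (Real.log (u' s) - Real.log (u s) - 1) * u s + u s / u' s * u' s = _
      rw [div_mul_cancel₀ _ hup'.ne']
      ring
    rw [← hR]
    refine integral_mono_ae hil ((hi.const_mul _).add (hi'.const_mul _)) ?_
    filter_upwards [hk, hx.nonneg, hw] with t hkt h0 hwt
    have hwp : 0 < w t := hmM.trans_le hwt.1
    have h1 := Real.log_le_sub_one_of_pos (mul_pos hwp (div_pos hup hup'))
    rw [Real.log_mul hwp.ne' (div_pos hup hup').ne', Real.log_div hup.ne' hup'.ne'] at h1
    have h2 : Real.log (w t) ≤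
        Real.log (u' s) - Real.log (u s) - 1 + u s / u' s * w t := by linarith
    have h3 := mul_le_mul_of_nonneg_left h2 (mul_nonneg (h.pos.le.trans hkt.1) h0)
    change k s t * (x t * Real.log (w t)) ≤ (Real.log (u' s) - Real.log (u s) - 1) *
      (k s t * x t) + u s / u' s * (k s t * (x t * w t))
    linarith
  calc 0 ≤ ∫ t, x t * Real.log (w t) * w t ∂μ := hent
    _ = ∫ s, y s / u s * intOp μ k (fun t => x t * Real.log (w t)) s ∂ν :=
      (h.integral_mul_intOp hxlog hq).symm
    _ ≤ _ := by
      refine integral_mono_ae ?_ (by simp only [mul_sub]; exact hlog'.sub hlog) ?_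
      · exact h.integrable_mul_intOp hxlog hq
      · filter_upwards [hjensen, hu, hy.nonneg] with s hs hus hs0
        have hup : 0 < u s := h.pos.trans_le hus.1
        have := mul_le_mul_of_nonneg_left hs (div_nonneg hs0 hup.le)
        rwa [← mul_assoc, div_mul_cancel₀ _ hup.ne'] at this

/-- Monotonicity of the Kullback-Leibler distance in one EM step, for bounded data `y`. -/
lemma kl_step_le (h : IsBddKernel μ ν k m M) (h1 : ∀ᵐ t ∂μ, ∫ s, k s t ∂ν = 1)
    {x : α → ℝ} (hx : IsDensity μ x) {y : β → ℝ} (hy : IsDensity ν y) {C : ℝ}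
    (hC : ∀ᵐ s ∂ν, y s ≤ C) :
    KL ν y (intOp μ k (fun t => x t *
      intOp ν (flip k) (fun s => y s / intOp μ k x s) t)) ≤ KL ν y (intOp μ k x) := by
  have hx' := h.isDensity_step hx hy
  have key := h.integral_mul_log_div_nonneg hx hy
  have hylog : Integrable (fun s => y s * Real.log (y s)) ν := by
    obtain ⟨B, hB⟩ := (isCompact_Icc (a := (0 : ℝ)) (b := C)).exists_bound_of_continuousOn
      Real.continuous_mul_log.continuousOn
    refine Integrable.of_bound (Real.continuous_mul_log.measurable.comp_aemeasurable
      hy.int.aestronglyMeasurable.aemeasurable).aestronglyMeasurable B ?_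
    filter_upwards [hy.nonneg, hC] with s hs0 hsC
    exact hB _ ⟨hs0, hsC⟩
  -- the expansion also holds where `y` vanishes, since `0 * log 0 = 0`
  have hKL : ∀ {z : α → ℝ}, IsDensity μ z → KL ν y (intOp μ k z) =
      ∫ s, y s * Real.log (y s) ∂ν - ∫ s, y s * Real.log (intOp μ k z s) ∂ν := by
    intro z hz
    have hl := h.integrable_mul_log_intOp hz hy.int
    have hi := h.integrable_intOp hz.int
    have e : KL ν y (intOp μ k z) = ∫ s, (y s * Real.log (y s) -
        y s * Real.log (intOp μ k z s) - y s + intOp μ k z s) ∂ν := by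
      refine integral_congr_ae ?_
      filter_upwards [h.intOp_mem hz] with s hs
      have hp : 0 < intOp μ k z s := h.pos.trans_le hs.1
      rcases eq_or_ne (y s) 0 with h0 | h0
      · simp [h0]
      · simp only [Real.log_div h0 hp.ne', mul_sub]
    have i1 : Integrable (fun s => y s * Real.log (y s) -
        y s * Real.log (intOp μ k z s)) ν := hylog.sub hl
    have i2 : Integrable (fun s => y s * Real.log (y s) -
        y s * Real.log (intOp μ k z s) - y s) ν := i1.sub hy.int
    rw [e, integral_add i2 hi, integral_sub i1 hy.int, integral_sub hylog hl, hy.one, h.integral_intOp h1 hz]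
    ring
  rw [hKL hx', hKL hx]
  simp only [mul_sub] at key
  rw [integral_sub (h.integrable_mul_log_intOp hx' hy.int)
    (h.integrable_mul_log_intOp hx hy.int)] at key
  linarith

end IsBddKernel

end Kernel

/-! ### The ordered-subsets iteration -/

/-- under (A1)-(A3), the OS-EM iterates satisfy
`f_{[k]}(x_{k+1}) ≤ f_{[k]}(x_k)` for every `k`. -/
theorem osem_f_monotone
    {d : ℕ} (Ω S : Set (Fin d → ℝ))
    (hΩo : IsOpen Ω) (hΩb : Bornology.IsBounded Ω)
    (hSo : IsOpen S) (hSb : Bornology.IsBounded S)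
    (N : ℕ) (hN : 0 < N)
    (a : ℕ → (Fin d → ℝ) → (Fin d → ℝ) → ℝ)
    (y : ℕ → (Fin d → ℝ) → ℝ)
    (ha_meas : ∀ j < N, Measurable (Function.uncurry (a j)))
    (m M : ℝ) (hm : 0 < m)
    -- (A2)
    (hA2 : ∀ j < N, ∀ᵐ s ∂(volume.restrict S), ∀ᵐ t ∂(volume.restrict Ω),
      m ≤ a j s t ∧ a j s t ≤ M)
    -- (A1)
    (hA1 : ∀ j < N, ∀ᵐ t ∂(volume.restrict Ω), (∫ s in S, a j s t) = 1)
    (M' : ℝ) (hM' : 0 < M')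
    (hy_int : ∀ j < N, Integrable (y j) (volume.restrict S))
    -- (A3)
    (hA3 : ∀ j < N, (0 ≤ᵐ[volume.restrict S] y j) ∧ (∫ s in S, y j s) = 1 ∧
      (∀ᵐ s ∂(volume.restrict S), y j s ≤ M'))
    -- the OS-EM iteration
    (x : ℕ → (Fin d → ℝ) → ℝ)
    (hx0 : InDelta Ω (x 0))
    (hiter : ∀ k, x (k + 1) = emStep Ω S (a (k % N)) (y (k % N)) (x k))
 :
    ∀ k, KL (volume.restrict S) (y (k % N)) (opA Ω (a (k % N)) (x (k + 1))) ≤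
      KL (volume.restrict S) (y (k % N)) (opA Ω (a (k % N)) (x k)) := by
  have hne : ∀ k, k % N < N := fun k => Nat.mod_lt k hN
  have : IsFiniteMeasure (volume.restrict Ω) := ⟨by simpa using hΩb.measure_lt_top⟩
  have : IsFiniteMeasure (volume.restrict S) := ⟨by simpa using hSb.measure_lt_top⟩
  -- the upper bound is enlarged to `max m M` so that `m ≤ max m M` needs no nonemptiness argument
  have hker : ∀ j < N, IsBddKernel (volume.restrict Ω) (volume.restrict S) (a j) m (max m M) := by
    intro j hj
    refine ⟨hm, le_max_left _ _, ha_meas j hj, ?_⟩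
    filter_upwards [hA2 j hj] with s hs
    filter_upwards [hs] with t ht
    exact ⟨ht.1, ht.2.trans (le_max_right _ _)⟩
  have hy : ∀ j < N, IsDensity (volume.restrict S) (y j) := fun j hj =>
    ⟨hy_int j hj, (hA3 j hj).1, (hA3 j hj).2.1⟩
  have hx : ∀ k, IsDensity (volume.restrict Ω) (x k) := by
    intro k
    induction k with
    | zero => exact ⟨hx0.1, hx0.2.1, hx0.2.2⟩
    | succ k ih =>
      rw [hiter k]
      exact (hker _ (hne k)).isDensity_step ih (hy _ (hne k))
  intro k
  rw [hiter k]
  exact (hker _ (hne k)).kl_step_le (hA1 _ (hne k)) (hx k) (hy _ (hne k)) (hA3 _ (hne k)).2.2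
end

section
/- Under assumptions (A1)-(A4), the sequence { d( x^*, x_k ) } of Kullback-Leibler distances from the solution x^* to the OS-EM iterates x_k is nonincreasing in k. -/
/-!
Write `A = A_j`, `y = y_j` for the operator and the datum of a single step, `x` for the current
iterate, `w = y / (A x)` and `c = A* w`, so that the next iterate is `x c`.  All iterates are
probability densities, because `∫ x c = ∫ w (A x) = ∫ y = 1`.  Hence
`d(x*, x c) - d(x*, x) = - ∫ x* ln c`, and monotonicity amounts to `∫ x* ln c ≥ 0`.

By (A1) the function `a(·, t)` is a probability density, so Jensen's inequality gives
`ln c ≥ A* (ln w)`.  Since `A x* = y`, Fubini's theorem and `ln w ≥ 1 - 1 / w` yield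
`∫ x* ln c ≥ ∫ y ln w ≥ ∫ (y - A x) = 0` (`integral_mul_log_nonneg`).

Every logarithm is harmless: `x*` is itself a probability density, so `y = A x* ≥ m`, and
therefore `w`, and with it `c`, takes its values in `[m / M, M' / m]` almost everywhere.
In particular finiteness of `d(x*, x)` passes from each iterate to the next.
-/


open MeasureTheory Real Filter

/-! ### Kernels, adjointness and bounds -/

/-- A measurable kernel `a(s, t)` with values in `[m, M]`, `0 < m`, `0 < M`, whose `s`-marginals
`∫ a(s, t) ds` equal `1`. -/
structure IsEMKernel {α β : Type*} [MeasurableSpace α] [MeasurableSpace β]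
    (μ : Measure α) (ν : Measure β) (a : β → α → ℝ) (m M : ℝ) : Prop where
  meas : Measurable (Function.uncurry a)
  m_pos : 0 < m
  M_pos : 0 < M
  bdd : ∀ᵐ s ∂ν, ∀ᵐ t ∂μ, m ≤ a s t ∧ a s t ≤ M
  marginal : ∀ᵐ t ∂μ, (∫ s, a s t ∂ν) = 1

/-- A probability density with respect to `μ`. -/
def IsDensity_s9 {α : Type*} [MeasurableSpace α] (μ : Measure α) (x : α → ℝ) : Prop :=
  Integrable x μ ∧ (0 ≤ᵐ[μ] x) ∧ (∫ t, x t ∂μ) = 1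

namespace IsEMKernel

variable {α β : Type*} [MeasurableSpace α] [MeasurableSpace β]
  {μ : Measure α} {ν : Measure β}
  {a : β → α → ℝ} {m M : ℝ}

lemma measurableSet_bdd (h : IsEMKernel μ ν a m M) :
    MeasurableSet {p : β × α | m ≤ a p.1 p.2 ∧ a p.1 p.2 ≤ M} :=
  (measurableSet_le measurable_const h.meas).inter (measurableSet_le h.meas measurable_const)

lemma abs_le (h : IsEMKernel μ ν a m M) {r : ℝ} (hr : m ≤ r ∧ r ≤ M) : ‖r‖ ≤ M := by
  have := h.m_pos
  rw [Real.norm_eq_abs, abs_of_nonneg (by linarith)]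
  exact hr.2

variable [IsFiniteMeasure μ] [IsFiniteMeasure ν]

lemma bdd_prod (h : IsEMKernel μ ν a m M) :
    ∀ᵐ p ∂(ν.prod μ), m ≤ a p.1 p.2 ∧ a p.1 p.2 ≤ M :=
  (Measure.ae_prod_iff_ae_ae h.measurableSet_bdd).2 h.bdd

lemma bdd_swap (h : IsEMKernel μ ν a m M) :
    ∀ᵐ t ∂μ, ∀ᵐ s ∂ν, m ≤ a s t ∧ a s t ≤ M :=
  (Measure.ae_ae_comm h.measurableSet_bdd).1 h.bdd

lemma integrable_prod (h : IsEMKernel μ ν a m M) {f : α → ℝ} {g : β → ℝ}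
    (hf : Integrable f μ) (hg : Integrable g ν) :
    Integrable (fun p : β × α => a p.1 p.2 * (g p.1 * f p.2)) (ν.prod μ) :=
  (hg.mul_prod hf).bdd_mul h.meas.aestronglyMeasurable
    (h.bdd_prod.mono fun _ hp => h.abs_le hp)

lemma integrable_left (h : IsEMKernel μ ν a m M) {g : β → ℝ} (hg : Integrable g ν) :
    ∀ᵐ t ∂μ, Integrable (fun s => a s t * g s) ν := by
  filter_upwards [h.bdd_swap] with t ht
  exact hg.bdd_mul (h.meas.comp measurable_prodMk_right).aestronglyMeasurable
    (ht.mono fun _ hp => h.abs_le hp)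

lemma integrable_right (h : IsEMKernel μ ν a m M) {f : α → ℝ} (hf : Integrable f μ) :
    ∀ᵐ s ∂ν, Integrable (fun t => a s t * f t) μ := by
  filter_upwards [h.bdd] with s hs
  exact hf.bdd_mul (h.meas.comp measurable_prodMk_left).aestronglyMeasurable
    (hs.mono fun _ hp => h.abs_le hp)

/-- `⟨g, A f⟩ = ⟨f, A* g⟩`. -/
lemma fubini (h : IsEMKernel μ ν a m M) {f : α → ℝ} {g : β → ℝ}
    (hf : Integrable f μ) (hg : Integrable g ν) :
    (∫ s, g s * (∫ t, a s t * f t ∂μ) ∂ν) = ∫ t, f t * (∫ s, a s t * g s ∂ν) ∂μ := by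
  have key := integral_integral_swap (f := fun s t => a s t * (g s * f t))
    (h.integrable_prod hf hg)
  simp only [← integral_const_mul]
  refine Eq.trans ?_ (key.trans ?_)
  · exact integral_congr_ae (.of_forall fun s => integral_congr_ae (.of_forall fun t => by
      simp only; ring))
  · exact integral_congr_ae (.of_forall fun s => integral_congr_ae (.of_forall fun t => by
      simp only; ring))

lemma integrable_mul_adjoint (h : IsEMKernel μ ν a m M) {f : α → ℝ} {g : β → ℝ}
    (hf : Integrable f μ) (hg : Integrable g ν) :
    Integrable (fun t => f t * (∫ s, a s t * g s ∂ν)) μ := by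
  refine (h.integrable_prod hf hg).integral_prod_right.congr (.of_forall fun t => ?_)
  simp only [← integral_const_mul]
  exact integral_congr_ae (.of_forall fun s => by simp only; ring)

lemma integrable_adjoint (h : IsEMKernel μ ν a m M) {g : β → ℝ} (hg : Integrable g ν) :
    Integrable (fun t => ∫ s, a s t * g s ∂ν) μ := by
  simpa using h.integrable_mul_adjoint (integrable_const (1 : ℝ)) hg

lemma integrable_op (h : IsEMKernel μ ν a m M) {f : α → ℝ} (hf : Integrable f μ) :
    Integrable (fun s => ∫ t, a s t * f t ∂μ) ν := by
  simpa using (h.integrable_prod hf (integrable_const (1 : ℝ))).integral_prod_left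

lemma integral_op (h : IsEMKernel μ ν a m M) {f : α → ℝ} (hf : Integrable f μ) :
    (∫ s, (∫ t, a s t * f t ∂μ) ∂ν) = ∫ t, f t ∂μ := by
  have key := h.fubini hf (integrable_const (1 : ℝ))
  simp only [one_mul, mul_one] at key
  rw [key]
  refine integral_congr_ae ?_
  filter_upwards [h.marginal] with t ht
  rw [ht, mul_one]

lemma op_bdd (h : IsEMKernel μ ν a m M) {f : α → ℝ} (hf : IsDensity_s9 μ f) :
    ∀ᵐ s ∂ν, m ≤ (∫ t, a s t * f t ∂μ) ∧ (∫ t, a s t * f t ∂μ) ≤ M := by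
  obtain ⟨hfi, hf0, hf1⟩ := hf
  filter_upwards [h.bdd, h.integrable_right hfi] with s hs hi
  constructor
  · calc m = ∫ t, m * f t ∂μ := by rw [integral_const_mul, hf1, mul_one]
      _ ≤ _ := by
        refine integral_mono_ae (hfi.const_mul m) hi ?_
        filter_upwards [hs, hf0] with t ht h0
        exact mul_le_mul_of_nonneg_right ht.1 h0
  · calc _ ≤ ∫ t, M * f t ∂μ := by
          refine integral_mono_ae hi (hfi.const_mul M) ?_
          filter_upwards [hs, hf0] with t ht h0
          exact mul_le_mul_of_nonneg_right ht.2 h0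
      _ = M := by rw [integral_const_mul, hf1, mul_one]

/-- `A* g` is an average of `g`, so it inherits the bounds of `g`. -/
lemma adjoint_bdd (h : IsEMKernel μ ν a m M) {g : β → ℝ} (hg : Integrable g ν) {δ K : ℝ}
    (hb : ∀ᵐ s ∂ν, δ ≤ g s ∧ g s ≤ K) :
    ∀ᵐ t ∂μ, δ ≤ (∫ s, a s t * g s ∂ν) ∧ (∫ s, a s t * g s ∂ν) ≤ K := by
  filter_upwards [h.bdd_swap, h.integrable_left hg, h.marginal,
    h.integrable_left (integrable_const (1 : ℝ))] with t ht hi h1 hi1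
  have hm := h.m_pos
  simp only [mul_one] at hi1
  constructor
  · calc δ = ∫ s, a s t * δ ∂ν := by rw [integral_mul_const, h1, one_mul]
      _ ≤ _ := by
        refine integral_mono_ae (hi1.mul_const δ) hi ?_
        filter_upwards [ht, hb] with s hs hgs
        exact mul_le_mul_of_nonneg_left hgs.1 (by linarith)
  · calc _ ≤ ∫ s, a s t * K ∂ν := by
          refine integral_mono_ae hi (hi1.mul_const K) ?_
          filter_upwards [ht, hb] with s hs hgs
          exact mul_le_mul_of_nonneg_left hgs.2 (by linarith)
      _ = K := by rw [integral_mul_const, h1, one_mul]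

/-- Jensen's inequality `A* (ln w) ≤ ln (A* w)`, from `ln w ≤ ln c + w / c - 1`
at `c = A* w`. -/
lemma jensen_log (h : IsEMKernel μ ν a m M) {w : β → ℝ} (hw : Integrable w ν)
    (hlw : Integrable (fun s => Real.log (w s)) ν) {δ K : ℝ} (hδ : 0 < δ)
    (hb : ∀ᵐ s ∂ν, δ ≤ w s ∧ w s ≤ K) :
    ∀ᵐ t ∂μ, (∫ s, a s t * Real.log (w s) ∂ν) ≤ Real.log (∫ s, a s t * w s ∂ν) := by
  filter_upwards [h.bdd_swap, h.integrable_left hw, h.integrable_left hlw, h.marginal,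
    h.integrable_left (integrable_const (1 : ℝ)), h.adjoint_bdd hw hb]
    with t ht hi hil h1 hi1 hc
  have hm := h.m_pos
  simp only [mul_one] at hi1
  set c := ∫ s, a s t * w s ∂ν with hcdef
  have hc0 : 0 < c := hδ.trans_le hc.1
  calc (∫ s, a s t * Real.log (w s) ∂ν)
      ≤ ∫ s, (a s t * (Real.log c - 1) + (a s t * w s) * c⁻¹) ∂ν := by
        refine integral_mono_ae hil ((hi1.mul_const _).add (hi.mul_const _)) ?_
        filter_upwards [ht, hb] with s hs hws
        have hw0 : 0 < w s := hδ.trans_le hws.1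
        have h2 := Real.log_le_sub_one_of_pos (div_pos hw0 hc0)
        rw [Real.log_div hw0.ne' hc0.ne', div_eq_mul_inv] at h2
        have h3 : Real.log (w s) ≤ (Real.log c - 1) + w s * c⁻¹ := by linarith
        calc a s t * Real.log (w s) ≤ a s t * ((Real.log c - 1) + w s * c⁻¹) :=
              mul_le_mul_of_nonneg_left h3 (by linarith)
          _ = _ := by ring
    _ = Real.log c := by
        rw [integral_add (hi1.mul_const _) (hi.mul_const _), integral_mul_const,
          integral_mul_const, h1, ← hcdef, mul_inv_cancel₀ hc0.ne']
        ring

end IsEMKernel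

/-! ### Integrability of logarithms -/

lemma norm_log_le {δ K r : ℝ} (hδ : 0 < δ) (hr : δ ≤ r ∧ r ≤ K) :
    ‖Real.log r‖ ≤ max |Real.log δ| |Real.log K| := by
  rw [Real.norm_eq_abs]
  exact abs_le_max_abs_abs (Real.log_le_log hδ hr.1)
    (Real.log_le_log (hδ.trans_le hr.1) hr.2)

lemma aestronglyMeasurable_log {α : Type*} [MeasurableSpace α] {μ : Measure α} {f : α → ℝ}
    (hf : Integrable f μ) : AEStronglyMeasurable (fun s => Real.log (f s)) μ :=
  (Real.measurable_log.comp_aemeasurable hf.aemeasurable).aestronglyMeasurable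

lemma integrable_log {α : Type*} [MeasurableSpace α] {μ : Measure α} [IsFiniteMeasure μ]
    {f : α → ℝ} (hf : Integrable f μ) {δ K : ℝ} (hδ : 0 < δ)
    (hb : ∀ᵐ s ∂μ, δ ≤ f s ∧ f s ≤ K) : Integrable (fun s => Real.log (f s)) μ :=
  .of_bound (aestronglyMeasurable_log hf) _ (hb.mono fun _ hs => norm_log_le hδ hs)

/-! ### A single EM step -/

namespace IsEMKernel

variable {α β : Type*} [MeasurableSpace α] [MeasurableSpace β]
  {μ : Measure α} {ν : Measure β} [IsFiniteMeasure μ] [IsFiniteMeasure ν]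
  {a : β → α → ℝ} {m M M' : ℝ} {x xs : α → ℝ} {y : β → ℝ}

/-- The quotient `w = y / (A x)` is bounded, and bounded away from `0`. -/
lemma ratio_bdd (h : IsEMKernel μ ν a m M) (hx : IsDensity_s9 μ x)
    (hyb : ∀ᵐ s ∂ν, m ≤ y s ∧ y s ≤ M') :
    ∀ᵐ s ∂ν, m / M ≤ y s / (∫ t, a s t * x t ∂μ) ∧
      y s / (∫ t, a s t * x t ∂μ) ≤ M' / m := by
  have hm := h.m_pos
  filter_upwards [h.op_bdd hx, hyb] with s hs hys
  have hA : 0 < ∫ t, a s t * x t ∂μ := hm.trans_le hs.1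
  exact ⟨div_le_div₀ (by linarith) hys.1 hA hs.2, div_le_div₀ (by linarith) hys.2 hm hs.1⟩

lemma integrable_ratio (h : IsEMKernel μ ν a m M) (hx : IsDensity_s9 μ x) (hy : Integrable y ν)
    (hyb : ∀ᵐ s ∂ν, m ≤ y s ∧ y s ≤ M') :
    Integrable (fun s => y s / (∫ t, a s t * x t ∂μ)) ν := by
  refine .of_bound (C := M' / m)
    (hy.aemeasurable.div (h.integrable_op hx.1).aemeasurable).aestronglyMeasurable ?_
  filter_upwards [h.ratio_bdd hx hyb] with s hs
  have := div_pos h.m_pos h.M_pos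
  rw [Real.norm_eq_abs, abs_of_nonneg (by linarith)]
  exact hs.2

/-- The EM step maps densities to densities. -/
lemma density_step (h : IsEMKernel μ ν a m M) (hx : IsDensity_s9 μ x) (hy : IsDensity_s9 ν y)
    (hyb : ∀ᵐ s ∂ν, m ≤ y s ∧ y s ≤ M') :
    IsDensity_s9 μ (fun t => x t * ∫ s, a s t * (y s / (∫ t, a s t * x t ∂μ)) ∂ν) := by
  have hw := h.integrable_ratio hx hy.1 hyb
  refine ⟨h.integrable_mul_adjoint hx.1 hw, ?_, ?_⟩
  · filter_upwards [hx.2.1, h.adjoint_bdd hw (h.ratio_bdd hx hyb)] with t ht hc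
    have := div_pos h.m_pos h.M_pos
    exact mul_nonneg ht (by linarith)
  · rw [← h.fubini hx.1 hw, ← hy.2.2]
    refine integral_congr_ae ?_
    filter_upwards [h.op_bdd hx] with s hs
    have hA : 0 < ∫ t, a s t * x t ∂μ := h.m_pos.trans_le hs.1
    exact div_mul_cancel₀ _ hA.ne'

/-- `∫ x* ln c ≥ 0` for `c = A* (y / (A x))`. -/
lemma integral_mul_log_nonneg (h : IsEMKernel μ ν a m M) (hx : IsDensity_s9 μ x)
    (hy : IsDensity_s9 ν y) (hyb : ∀ᵐ s ∂ν, m ≤ y s ∧ y s ≤ M') (hxs : IsDensity_s9 μ xs)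
    (hsol : ∀ᵐ s ∂ν, (∫ t, a s t * xs t ∂μ) = y s) :
    Integrable (fun t => xs t *
      Real.log (∫ s, a s t * (y s / (∫ t, a s t * x t ∂μ)) ∂ν)) μ ∧
    0 ≤ ∫ t, xs t *
      Real.log (∫ s, a s t * (y s / (∫ t, a s t * x t ∂μ)) ∂ν) ∂μ := by
  have hw := h.integrable_ratio hx hy.1 hyb
  have hb := h.ratio_bdd hx hyb
  have hδ : 0 < m / M := div_pos h.m_pos h.M_pos
  have hlw := integrable_log hw hδ hb
  have hI : Integrable (fun t => xs t *
      Real.log (∫ s, a s t * (y s / (∫ t, a s t * x t ∂μ)) ∂ν)) μ :=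
    hxs.1.mul_bdd (aestronglyMeasurable_log (h.integrable_adjoint hw))
      ((h.adjoint_bdd hw hb).mono fun _ ht => norm_log_le hδ ht)
  refine ⟨hI, ?_⟩
  have hAx := h.integrable_op hx.1
  calc (0 : ℝ) = ∫ s, (y s - ∫ t, a s t * x t ∂μ) ∂ν := by
        rw [integral_sub hy.1 hAx, h.integral_op hx.1, hy.2.2, hx.2.2, sub_self]
    _ ≤ ∫ s, Real.log (y s / (∫ t, a s t * x t ∂μ)) * y s ∂ν := by
        refine integral_mono_ae (hy.1.sub hAx) (hy.1.bdd_mul hlw.aestronglyMeasurable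
          (hb.mono fun _ hs => norm_log_le hδ hs)) ?_
        filter_upwards [h.op_bdd hx, hyb] with s hs hys
        have hA : 0 < ∫ t, a s t * x t ∂μ := h.m_pos.trans_le hs.1
        have hy0 : 0 < y s := h.m_pos.trans_le hys.1
        have h1 := Real.one_sub_inv_le_log_of_pos (div_pos hy0 hA)
        calc y s - (∫ t, a s t * x t ∂μ)
            = (1 - (y s / (∫ t, a s t * x t ∂μ))⁻¹) * y s := by field_simp
          _ ≤ _ := mul_le_mul_of_nonneg_right h1 hy0.le
    _ = ∫ s, Real.log (y s / (∫ t, a s t * x t ∂μ)) * (∫ t, a s t * xs t ∂μ) ∂ν := by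
        refine integral_congr_ae ?_
        filter_upwards [hsol] with s hs
        rw [hs]
    _ = ∫ t, xs t * (∫ s, a s t * Real.log (y s / (∫ t, a s t * x t ∂μ)) ∂ν) ∂μ :=
        h.fubini hxs.1 hlw
    _ ≤ _ := by
        refine integral_mono_ae (h.integrable_mul_adjoint hxs.1 hlw) hI ?_
        filter_upwards [h.jensen_log hw hlw hδ hb, hxs.2.1] with t ht h0
        exact mul_le_mul_of_nonneg_left ht h0

/-- One EM step keeps `d(x*, x)` finite and does not increase it.  The condition `hz`, that
`x*` vanishes wherever `x` does, guards against the convention `x* / 0 = 0`: where `x` vanishes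
the logarithm is multiplied by `x* = 0`. -/
lemma kl_step (h : IsEMKernel μ ν a m M) (hx : IsDensity_s9 μ x)
    (hy : IsDensity_s9 ν y) (hyb : ∀ᵐ s ∂ν, m ≤ y s ∧ y s ≤ M') (hxs : IsDensity_s9 μ xs)
    (hsol : ∀ᵐ s ∂ν, (∫ t, a s t * xs t ∂μ) = y s)
    (hfin : Integrable (fun t => xs t * Real.log (xs t / x t) - xs t + x t) μ)
    (hz : ∀ᵐ t ∂μ, x t = 0 → xs t = 0) {x' : α → ℝ}
    (hx' : x' = fun t => x t * ∫ s, a s t * (y s / (∫ t, a s t * x t ∂μ)) ∂ν) :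
    Integrable (fun t => xs t * Real.log (xs t / x' t) - xs t + x' t) μ ∧
    (∀ᵐ t ∂μ, x' t = 0 → xs t = 0) ∧ KL μ xs x' ≤ KL μ xs x := by
  have hd : IsDensity_s9 μ x' := hx' ▸ h.density_step hx hy hyb
  have hw := h.integrable_ratio hx hy.1 hyb
  have hδ : 0 < m / M := div_pos h.m_pos h.M_pos
  have hc := h.adjoint_bdd hw (h.ratio_bdd hx hyb)
  obtain ⟨hI, hpos⟩ := h.integral_mul_log_nonneg hx hy hyb hxs hsol
  set c : α → ℝ := fun t => ∫ s, a s t * (y s / (∫ t, a s t * x t ∂μ)) ∂ν with hcdef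
  have hx'c : ∀ t, x' t = x t * c t := fun t => by rw [hx']
  have heq : (fun t => (xs t * Real.log (xs t / x t) - xs t + x t) - xs t * Real.log (c t)
      + (x' t - x t)) =ᵐ[μ] fun t => xs t * Real.log (xs t / x' t) - xs t + x' t := by
    filter_upwards [hc, hz] with t hct hzt
    have hc0 : c t ≠ 0 := (hδ.trans_le hct.1).ne'
    by_cases h0 : xs t = 0
    · simp [h0]
    · have hx0 : x t ≠ 0 := fun hh => h0 (hzt hh)
      rw [hx'c, ← div_div, Real.log_div (div_ne_zero h0 hx0) hc0]
      ring
  have hI1 := hfin.sub hI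
  have hI2 := hd.1.sub hx.1
  refine ⟨(hI1.add hI2).congr heq, ?_, ?_⟩
  · filter_upwards [hc, hz] with t hct hzt h0
    rw [hx'c] at h0
    exact hzt ((mul_eq_zero.1 h0).resolve_right (hδ.trans_le hct.1).ne')
  · unfold KL
    have e : (∫ t, ((xs t * Real.log (xs t / x t) - xs t + x t) - xs t * Real.log (c t)
        + (x' t - x t)) ∂μ) = (∫ t, (xs t * Real.log (xs t / x t) - xs t + x t) ∂μ)
        - ∫ t, xs t * Real.log (c t) ∂μ := by
      have e1 := integral_add hI1 hI2
      have e2 := integral_sub hfin hI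
      have e3 := integral_sub hd.1 hx.1
      rw [hd.2.2, hx.2.2, sub_self] at e3
      simp only [Pi.sub_apply] at e1
      rw [e1, e2, e3, add_zero]
    rw [← integral_congr_ae heq, e]
    linarith

end IsEMKernel

/-! ### Monotonicity along the iteration -/

/-- under (A1)-(A4), the sequence `{ d(x*, x_k) }` is nonincreasing. -/
theorem osem_kl_to_solution_antitone
    {d : ℕ} (Ω S : Set (Fin d → ℝ))
    (hΩo : IsOpen Ω) (hΩb : Bornology.IsBounded Ω)
    (hSo : IsOpen S) (hSb : Bornology.IsBounded S)
    (N : ℕ) (hN : 0 < N)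
    (a : ℕ → (Fin d → ℝ) → (Fin d → ℝ) → ℝ)
    (y : ℕ → (Fin d → ℝ) → ℝ)
    (ha_meas : ∀ j < N, Measurable (Function.uncurry (a j)))
    (m M : ℝ) (hm : 0 < m)
    -- (A2)
    (hA2 : ∀ j < N, ∀ᵐ s ∂(volume.restrict S), ∀ᵐ t ∂(volume.restrict Ω),
      m ≤ a j s t ∧ a j s t ≤ M)
    -- (A1)
    (hA1 : ∀ j < N, ∀ᵐ t ∂(volume.restrict Ω), (∫ s in S, a j s t) = 1)
    (M' : ℝ) (hM' : 0 < M')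
    (hy_int : ∀ j < N, Integrable (y j) (volume.restrict S))
    -- (A3)
    (hA3 : ∀ j < N, (0 ≤ᵐ[volume.restrict S] y j) ∧ (∫ s in S, y j s) = 1 ∧
      (∀ᵐ s ∂(volume.restrict S), y j s ≤ M'))
    -- the OS-EM iteration
    (x : ℕ → (Fin d → ℝ) → ℝ)
    (hx0 : InDelta Ω (x 0))
    (hiter : ∀ k, x (k + 1) = emStep Ω S (a (k % N)) (y (k % N)) (x k))
    -- (A4): a nonnegative solution x* of the system, not a.e. zero, with d(x*, x_0) < ∞
    (xstar : (Fin d → ℝ) → ℝ)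
    (hxstar_int : Integrable xstar (volume.restrict Ω))
    (hxstar_nonneg : 0 ≤ᵐ[volume.restrict Ω] xstar)
    (hxstar_ne : ¬ (xstar =ᵐ[volume.restrict Ω] (0 : (Fin d → ℝ) → ℝ)))
    (hxstar_sol : ∀ j < N, opA Ω (a j) xstar =ᵐ[volume.restrict S] y j)
    (hfin : Integrable (fun t => xstar t * Real.log (xstar t / x 0 t) - xstar t + x 0 t)
      (volume.restrict Ω))
    (hfin' : ∀ᵐ t ∂(volume.restrict Ω), x 0 t = 0 → xstar t = 0)
 :
    Antitone (fun k => KL (volume.restrict Ω) xstar (x k)) := by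
  have hΩf : IsFiniteMeasure (volume.restrict Ω) := ⟨by simpa using hΩb.measure_lt_top⟩
  have hSf : IsFiniteMeasure (volume.restrict S) := ⟨by simpa using hSb.measure_lt_top⟩
  -- Both measures are nonzero because they carry densities, so (A2) is satisfied somewhere.
  have hΩ0 : (ae (volume.restrict Ω)).NeBot := by
    rw [ae_neBot]
    intro h0
    simpa [h0] using hx0.2.2
  have hS0 : (ae (volume.restrict S)).NeBot := by
    rw [ae_neBot]
    intro h0
    simpa [h0] using (hA3 0 hN).2.1
  have hM : 0 < M := by
    obtain ⟨s, hs⟩ := (hA2 0 hN).exists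
    obtain ⟨t, ht⟩ := hs.exists
    linarith [ht.1, ht.2]
  have hK : ∀ j < N, IsEMKernel (volume.restrict Ω) (volume.restrict S) (a j) m M :=
    fun j hj => ⟨ha_meas j hj, hm, hM, hA2 j hj, hA1 j hj⟩
  have hy : ∀ j < N, IsDensity_s9 (volume.restrict S) (y j) :=
    fun j hj => ⟨hy_int j hj, (hA3 j hj).1, (hA3 j hj).2.1⟩
  have hxs : IsDensity_s9 (volume.restrict Ω) xstar := by
    refine ⟨hxstar_int, hxstar_nonneg, ?_⟩
    rw [← (hK 0 hN).integral_op hxstar_int, ← (hy 0 hN).2.2]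
    exact integral_congr_ae (hxstar_sol 0 hN)
  have hyb : ∀ j < N, ∀ᵐ s ∂(volume.restrict S), m ≤ y j s ∧ y j s ≤ M' := by
    intro j hj
    filter_upwards [(hK j hj).op_bdd hxs, hxstar_sol j hj, (hA3 j hj).2.2] with s h1 h2 h3
    exact ⟨h2 ▸ h1.1, h3⟩
  have hinv : ∀ k, IsDensity_s9 (volume.restrict Ω) (x k) ∧
      Integrable (fun t => xstar t * Real.log (xstar t / x k t) - xstar t + x k t)
        (volume.restrict Ω) ∧
      ∀ᵐ t ∂(volume.restrict Ω), x k t = 0 → xstar t = 0 := by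
    intro k
    induction k with
    | zero => exact ⟨hx0, hfin, hfin'⟩
    | succ k ih =>
      have hj := Nat.mod_lt k hN
      obtain ⟨h1, h2, h3⟩ := ih
      obtain ⟨g1, g2, -⟩ := (hK _ hj).kl_step h1 (hy _ hj) (hyb _ hj) hxs (hxstar_sol _ hj)
        h2 h3 (hiter k)
      refine ⟨?_, g1, g2⟩
      rw [hiter k]
      exact (hK _ hj).density_step h1 (hy _ hj) (hyb _ hj)
  refine antitone_nat_of_succ_le fun k => ?_
  have hj := Nat.mod_lt k hN
  obtain ⟨h1, h2, h3⟩ := hinv k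
  exact ((hK _ hj).kl_step h1 (hy _ hj) (hyb _ hj) hxs (hxstar_sol _ hj) h2 h3 (hiter k)).2.2
end

section
/- Under assumptions (A1)-(A4), the OS-EM iterates x_k satisfy lim_{k -> \infty} f_{[k]}( x_k ) = 0, where f_j(x) = d( y_j, A_j x ) and [k] = k mod N. -/
/-!
The functional that decreases along the iteration is `d(x*, ·)`. One step multiplies `x_k` by
`g_k = A* (y / A x_k)`. For almost every `t` the kernel `a(·, t)` is a probability density, so
Jensen's inequality gives `log g_k ≥ A* (log (y / A x_k))`; integrating against `x*` and using
`A x* = y` yields `f_{[k]}(x_k) ≤ ∫ x* log g_k` (`emGain_bound`).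

On the other hand `x_n = x_0 ∏_{k<n} g_k`, and the pointwise inequality
`x* log (x* / x_n) - x* + x_n ≥ 0` gives `∑_{k<n} ∫ x* log g_k ≤ d(x*, x_0)`, because every iterate
has the same mass as `x_0`. Hence the nonnegative numbers `f_{[k]}(x_k)` have bounded partial sums,
so they tend to zero.

All integrability questions are harmless: `x*` has mass one, so `y = A x*` is bounded below by
`m > 0`, and `y`, `A x_k`, their quotient and `g_k` all take values in compact subintervals of
`(0, ∞)`.
-/

open MeasureTheory Real Filter

section Kernel

variable {α β : Type*} [MeasurableSpace α] [MeasurableSpace β]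
  {μ : Measure α} {ν : Measure β} [IsFiniteMeasure μ] [IsFiniteMeasure ν]
  {a : β → α → ℝ} {m M : ℝ}

omit [IsFiniteMeasure ν] in
lemma kernel_ae_prod (ha : Measurable (Function.uncurry a))
    (hA : ∀ᵐ s ∂ν, ∀ᵐ t ∂μ, m ≤ a s t ∧ a s t ≤ M) :
    ∀ᵐ p ∂(ν.prod μ), m ≤ a p.1 p.2 ∧ a p.1 p.2 ≤ M :=
  (Measure.ae_prod_iff_ae_ae (p := fun p : β × α => m ≤ a p.1 p.2 ∧ a p.1 p.2 ≤ M)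
    ((measurableSet_le measurable_const ha).inter (measurableSet_le ha measurable_const))).2 hA

lemma kernel_ae_swap (ha : Measurable (Function.uncurry a))
    (hA : ∀ᵐ s ∂ν, ∀ᵐ t ∂μ, m ≤ a s t ∧ a s t ≤ M) :
    ∀ᵐ t ∂μ, ∀ᵐ s ∂ν, m ≤ a s t ∧ a s t ≤ M :=
  (Measure.ae_ae_comm (p := fun s t => m ≤ a s t ∧ a s t ≤ M)
    ((measurableSet_le measurable_const ha).inter (measurableSet_le ha measurable_const))).1 hA

omit [IsFiniteMeasure ν] in
lemma kernel_integrable_prod (ha : Measurable (Function.uncurry a)) (hm : 0 < m)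
    (hA : ∀ᵐ s ∂ν, ∀ᵐ t ∂μ, m ≤ a s t ∧ a s t ≤ M)
    {x : α → ℝ} (hx : Integrable x μ) {w : β → ℝ} (hw : Integrable w ν) :
    Integrable (fun p : β × α => a p.1 p.2 * (w p.1 * x p.2)) (ν.prod μ) := by
  refine (hw.mul_prod hx).bdd_mul (c := M) ha.aestronglyMeasurable ?_
  filter_upwards [kernel_ae_prod ha hA] with p hp
  have : 0 ≤ a p.1 p.2 := hm.le.trans hp.1
  simpa [abs_of_nonneg this, Function.uncurry] using hp.2

/-- Duality of `A` and `A*`. -/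
lemma kernel_duality_s10 (ha : Measurable (Function.uncurry a)) (hm : 0 < m)
    (hA : ∀ᵐ s ∂ν, ∀ᵐ t ∂μ, m ≤ a s t ∧ a s t ≤ M)
    {x : α → ℝ} (hx : Integrable x μ) {w : β → ℝ} (hw : Integrable w ν) :
    ∫ t, x t * (∫ s, a s t * w s ∂ν) ∂μ = ∫ s, (∫ t, a s t * x t ∂μ) * w s ∂ν := by
  have h := integral_integral_swap (f := fun s t => a s t * (w s * x t))
    (kernel_integrable_prod ha hm hA hx hw)
  calc _ = ∫ t, ∫ s, a s t * (w s * x t) ∂ν ∂μ := by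
        refine integral_congr_ae (.of_forall fun t => ?_)
        simp only
        rw [← integral_const_mul]
        congr 1; ext s; ring
    _ = _ := h.symm
    _ = _ := by
        refine integral_congr_ae (.of_forall fun s => ?_)
        simp only
        rw [← integral_mul_const]
        congr 1; ext t; ring

lemma kernel_integrable_left (ha : Measurable (Function.uncurry a)) (hm : 0 < m)
    (hA : ∀ᵐ s ∂ν, ∀ᵐ t ∂μ, m ≤ a s t ∧ a s t ≤ M)
    {x : α → ℝ} (hx : Integrable x μ) :
    Integrable (fun s => ∫ t, a s t * x t ∂μ) ν := by
  simpa using (kernel_integrable_prod ha hm hA hx (integrable_const (1 : ℝ))).integral_prod_left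

lemma kernel_integrable_right (ha : Measurable (Function.uncurry a)) (hm : 0 < m)
    (hA : ∀ᵐ s ∂ν, ∀ᵐ t ∂μ, m ≤ a s t ∧ a s t ≤ M)
    {w : β → ℝ} (hw : Integrable w ν) :
    Integrable (fun t => ∫ s, a s t * w s ∂ν) μ := by
  simpa using (kernel_integrable_prod ha hm hA (integrable_const (1 : ℝ)) hw).integral_prod_right

omit [IsFiniteMeasure μ] in
lemma kernel_section_left {b : α → ℝ} (hb : Measurable b) (hm : 0 < m)
    (hB : ∀ᵐ t ∂μ, m ≤ b t ∧ b t ≤ M) {x : α → ℝ} (hx : Integrable x μ) :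
    Integrable (fun t => b t * x t) μ := by
  refine hx.bdd_mul (c := M) hb.aestronglyMeasurable ?_
  filter_upwards [hB] with t ht
  simpa [abs_of_nonneg (hm.le.trans ht.1)] using ht.2

omit [IsFiniteMeasure μ] [IsFiniteMeasure ν] in
/-- On nonnegative functions of mass one, `A x` takes values in `[m, M]`. -/
lemma kernel_bounds (ha : Measurable (Function.uncurry a)) (hm : 0 < m)
    (hA : ∀ᵐ s ∂ν, ∀ᵐ t ∂μ, m ≤ a s t ∧ a s t ≤ M)
    {x : α → ℝ} (hx : Integrable x μ) (hx0 : 0 ≤ᵐ[μ] x) (hx1 : ∫ t, x t ∂μ = 1) :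
    ∀ᵐ s ∂ν, m ≤ ∫ t, a s t * x t ∂μ ∧ ∫ t, a s t * x t ∂μ ≤ M := by
  filter_upwards [hA] with s hs
  have hi := kernel_section_left (ha.comp measurable_prodMk_left) hm hs hx
  constructor
  · calc m = ∫ t, m * x t ∂μ := by rw [integral_const_mul, hx1, mul_one]
      _ ≤ _ := by
        refine integral_mono_ae (hx.const_mul m) hi ?_
        filter_upwards [hs, hx0] with t ht h0
        exact mul_le_mul_of_nonneg_right ht.1 h0
  · calc _ ≤ ∫ t, M * x t ∂μ := by
          refine integral_mono_ae hi (hx.const_mul M) ?_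
          filter_upwards [hs, hx0] with t ht h0
          exact mul_le_mul_of_nonneg_right ht.2 h0
      _ = M := by rw [integral_const_mul, hx1, mul_one]

/-- Jensen's inequality for the logarithm against a probability density `b`, together with the
fact that the average of a function with values in `[c, C]` lies in `[c, C]`. -/
lemma density_average {b w : β → ℝ} {c C : ℝ} (hc : 0 < c) (hb : Measurable b) (hm : 0 < m)
    (hB : ∀ᵐ s ∂ν, m ≤ b s ∧ b s ≤ M) (hb1 : ∫ s, b s ∂ν = 1)
    (hw : Integrable w ν) (hlw : Integrable (fun s => Real.log (w s)) ν)
    (hwb : ∀ᵐ s ∂ν, c ≤ w s ∧ w s ≤ C) :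
    (c ≤ ∫ s, b s * w s ∂ν ∧ ∫ s, b s * w s ∂ν ≤ C) ∧
      ∫ s, b s * Real.log (w s) ∂ν ≤ Real.log (∫ s, b s * w s ∂ν) := by
  have hbi : Integrable b ν := by
    simpa using kernel_section_left hb hm hB (integrable_const (1 : ℝ))
  have hi := kernel_section_left hb hm hB hw
  have hli := kernel_section_left hb hm hB hlw
  have h1 : c ≤ ∫ s, b s * w s ∂ν := by
    calc c = ∫ s, b s * c ∂ν := by rw [integral_mul_const, hb1, one_mul]
      _ ≤ _ := by
        refine integral_mono_ae (hbi.mul_const c) hi ?_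
        filter_upwards [hB, hwb] with s hs hws
        exact mul_le_mul_of_nonneg_left hws.1 (hm.le.trans hs.1)
  have h2 : ∫ s, b s * w s ∂ν ≤ C := by
    calc _ ≤ ∫ s, b s * C ∂ν := by
          refine integral_mono_ae hi (hbi.mul_const C) ?_
          filter_upwards [hB, hwb] with s hs hws
          exact mul_le_mul_of_nonneg_left hws.2 (hm.le.trans hs.1)
      _ = C := by rw [integral_mul_const, hb1, one_mul]
  refine ⟨⟨h1, h2⟩, ?_⟩
  set I := ∫ s, b s * w s ∂ν with hI
  have hIpos : 0 < I := hc.trans_le h1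
  -- integrate the tangent line inequality for `log` at the mean `I`
  calc ∫ s, b s * Real.log (w s) ∂ν
      ≤ ∫ s, (b s * (Real.log I - 1) + (b s * w s) * I⁻¹) ∂ν := by
        refine integral_mono_ae hli ((hbi.mul_const _).add (hi.mul_const _)) ?_
        filter_upwards [hB, hwb] with s hs hws
        have hwp : 0 < w s := hc.trans_le hws.1
        have h := Real.log_le_sub_one_of_pos (div_pos hwp hIpos)
        rw [Real.log_div hwp.ne' hIpos.ne'] at h
        have := mul_le_mul_of_nonneg_left h (hm.le.trans hs.1)
        simp only [div_eq_mul_inv] at this ⊢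
        nlinarith [this]
    _ = Real.log I := by
        rw [integral_add (hbi.mul_const _) (hi.mul_const _), integral_mul_const,
          integral_mul_const, hb1, ← hI, mul_inv_cancel₀ hIpos.ne']
        ring

lemma integrable_of_ae_bounds {f : β → ℝ} {c C : ℝ} (hf : AEStronglyMeasurable f ν)
    (hb : ∀ᵐ s ∂ν, c ≤ f s ∧ f s ≤ C) : Integrable f ν := by
  refine Integrable.of_bound hf (max |c| |C|) ?_
  filter_upwards [hb] with s hs
  exact abs_le_max_abs_abs hs.1 hs.2

lemma integrable_log_of_ae_bounds {f : β → ℝ} {c C : ℝ} (hc : 0 < c)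
    (hf : AEStronglyMeasurable f ν) (hb : ∀ᵐ s ∂ν, c ≤ f s ∧ f s ≤ C) :
    Integrable (fun s => Real.log (f s)) ν := by
  refine integrable_of_ae_bounds (c := Real.log c) (C := Real.log C)
    (Real.measurable_log.comp_aemeasurable hf.aemeasurable).aestronglyMeasurable ?_
  filter_upwards [hb] with s hs
  have := hc.trans_le hs.1
  exact ⟨Real.log_le_log hc hs.1, Real.log_le_log this hs.2⟩

/-- The pointwise Kullback-Leibler integrand is nonnegative at positive arguments. -/
lemma kl_integrand_nonneg {v u : ℝ} (hv : 0 < v) (hu : 0 < u) :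
    0 ≤ v * Real.log (v / u) - v + u := by
  have h := Real.log_le_sub_one_of_pos (div_pos hu hv)
  rw [Real.log_div hu.ne' hv.ne'] at h
  rw [Real.log_div hv.ne' hu.ne']
  have h2 := mul_le_mul_of_nonneg_left h hv.le
  have h3 : v * (u / v - 1) = u - v := by field_simp
  nlinarith

/-- One EM step `x ↦ x g` with `g = A* (y / A x)`: it preserves nonnegativity and mass, and the
Kullback-Leibler discrepancy `d(y, A x)` is nonnegative and at most the gain `∫ x* log g`. -/
lemma emGain_bound (ha : Measurable (Function.uncurry a)) (hm : 0 < m) (hM : 0 < M)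
    (hA : ∀ᵐ s ∂ν, ∀ᵐ t ∂μ, m ≤ a s t ∧ a s t ≤ M)
    (hA1 : ∀ᵐ t ∂μ, ∫ s, a s t ∂ν = 1)
    {y : β → ℝ} (hy : Integrable y ν) (hy1 : ∫ s, y s ∂ν = 1)
    {x xs : α → ℝ} (hx : Integrable x μ) (hx0 : 0 ≤ᵐ[μ] x) (hx1 : ∫ t, x t ∂μ = 1)
    (hxs : Integrable xs μ) (hxs0 : 0 ≤ᵐ[μ] xs)
    (hsol : (fun s => ∫ t, a s t * xs t ∂μ) =ᵐ[ν] y)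
    {g : α → ℝ} (hg : g = fun t => ∫ s, a s t * (y s / ∫ t, a s t * x t ∂μ) ∂ν) :
    (Integrable (fun t => x t * g t) μ ∧ (0 ≤ᵐ[μ] fun t => x t * g t) ∧ ∫ t, x t * g t ∂μ = 1) ∧
    (∀ᵐ t ∂μ, 0 < g t) ∧ Integrable (fun t => xs t * Real.log (g t)) μ ∧
    KL ν y (fun s => ∫ t, a s t * x t ∂μ) ≤ ∫ t, xs t * Real.log (g t) ∂μ ∧
    0 ≤ KL ν y (fun s => ∫ t, a s t * x t ∂μ) := by
  -- `∫ A u = ∫ u` for integrable `u`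
  have mass : ∀ u : α → ℝ, Integrable u μ → ∫ s, (∫ t, a s t * u t ∂μ) ∂ν = ∫ t, u t ∂μ := by
    intro u hu
    have h := kernel_duality_s10 ha hm hA hu (integrable_const (1 : ℝ))
    simp only [mul_one] at h
    rw [← h]
    refine integral_congr_ae ?_
    filter_upwards [hA1] with t ht
    simp [ht]
  have hxs1 : ∫ t, xs t ∂μ = 1 := by rw [← mass xs hxs, integral_congr_ae hsol, hy1]
  have hyb : ∀ᵐ s ∂ν, m ≤ y s ∧ y s ≤ M := by
    filter_upwards [kernel_bounds ha hm hA hxs hxs0 hxs1, hsol] with s hs he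
    rwa [← he]
  set Ax : β → ℝ := fun s => ∫ t, a s t * x t ∂μ with hAx
  have hAxb : ∀ᵐ s ∂ν, m ≤ Ax s ∧ Ax s ≤ M := kernel_bounds ha hm hA hx hx0 hx1
  have hAxi : Integrable Ax ν := kernel_integrable_left ha hm hA hx
  set w : β → ℝ := fun s => y s / Ax s with hw
  have hwb : ∀ᵐ s ∂ν, m / M ≤ w s ∧ w s ≤ M / m := by
    filter_upwards [hyb, hAxb] with s h1 h2
    have := hm.trans_le h2.1
    exact ⟨div_le_div₀ (hm.le.trans h1.1) h1.1 this h2.2, div_le_div₀ hM.le h1.2 hm h2.1⟩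
  have hwm : AEStronglyMeasurable w ν :=
    (hy.aestronglyMeasurable.aemeasurable.div
      hAxi.aestronglyMeasurable.aemeasurable).aestronglyMeasurable
  have hc : 0 < m / M := div_pos hm hM
  have hwi : Integrable w ν := integrable_of_ae_bounds hwm hwb
  have hlwi : Integrable (fun s => Real.log (w s)) ν := integrable_log_of_ae_bounds hc hwm hwb
  have hgm : AEStronglyMeasurable g μ := by
    rw [hg]; exact (kernel_integrable_right ha hm hA hwi).aestronglyMeasurable
  have key : ∀ᵐ t ∂μ, (m / M ≤ g t ∧ g t ≤ M / m) ∧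
      ∫ s, a s t * Real.log (w s) ∂ν ≤ Real.log (g t) := by
    filter_upwards [kernel_ae_swap ha hA, hA1] with t h1 h2
    rw [hg]
    exact density_average hc (ha.comp measurable_prodMk_right) hm h1 h2 hwi hlwi hwb
  have hgb : ∀ᵐ t ∂μ, m / M ≤ g t ∧ g t ≤ M / m := key.mono fun t h => h.1
  have hgpos : ∀ᵐ t ∂μ, 0 < g t := hgb.mono fun t h => hc.trans_le h.1
  have hxg : Integrable (fun t => x t * g t) μ := by
    refine hx.mul_bdd (c := M / m) hgm ?_
    filter_upwards [hgb, hgpos] with t h1 h2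
    simpa [abs_of_pos h2] using h1.2
  have hlg : AEStronglyMeasurable (fun t => Real.log (g t)) μ :=
    (Real.measurable_log.comp_aemeasurable hgm.aemeasurable).aestronglyMeasurable
  have hxslg : Integrable (fun t => xs t * Real.log (g t)) μ := by
    refine hxs.mul_bdd (c := max |Real.log (m / M)| |Real.log (M / m)|) hlg ?_
    filter_upwards [hgb, hgpos] with t h1 h2
    exact abs_le_max_abs_abs (Real.log_le_log hc h1.1) (Real.log_le_log h2 h1.2)
  have hylw : Integrable (fun s => y s * Real.log (w s)) ν := by
    refine hlwi.bdd_mul (c := M) hy.aestronglyMeasurable ?_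
    filter_upwards [hyb] with s hs
    simpa [abs_of_pos (hm.trans_le hs.1)] using hs.2
  have hdual := kernel_duality_s10 ha hm hA hxs hlwi
  have hKL : KL ν y Ax = ∫ s, y s * Real.log (w s) ∂ν := by
    unfold KL
    have h1 : ∫ s, (y s * Real.log (w s) - y s + Ax s) ∂ν
        = ∫ s, (y s * Real.log (w s) - y s) ∂ν + ∫ s, Ax s ∂ν := integral_add (hylw.sub hy) hAxi
    rw [h1, integral_sub hylw hy, hy1, mass x hx, hx1]
    ring
  refine ⟨⟨hxg, ?_, ?_⟩, hgpos, hxslg, ?_, ?_⟩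
  · filter_upwards [hx0, hgpos] with t h1 h2
    exact mul_nonneg h1 h2.le
  · rw [hg, kernel_duality_s10 ha hm hA hx hwi, ← hy1]
    refine integral_congr_ae ?_
    filter_upwards [hAxb] with s hs
    exact mul_div_cancel₀ _ (hm.trans_le hs.1).ne'
  · calc KL ν y Ax = ∫ s, (∫ t, a s t * xs t ∂μ) * Real.log (w s) ∂ν := by
          rw [hKL]
          refine integral_congr_ae ?_
          filter_upwards [hsol] with s hs
          rw [← hs]
      _ = ∫ t, xs t * (∫ s, a s t * Real.log (w s) ∂ν) ∂μ := hdual.symm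
      _ ≤ _ := by
          refine integral_mono_ae ?_ hxslg ?_
          · refine (kernel_integrable_prod ha hm hA hxs hlwi).integral_prod_right.congr
              (.of_forall fun t => ?_)
            simp only
            rw [← integral_const_mul]
            congr 1; ext s; ring
          · filter_upwards [key, hxs0] with t h1 h2
            exact mul_le_mul_of_nonneg_left h1.2 h2
  · refine integral_nonneg_of_ae ?_
    filter_upwards [hyb, hAxb] with s h1 h2
    exact kl_integrand_nonneg (hm.trans_le h1.1) (hm.trans_le h2.1)

end Kernel

/-- If `x n = x₀ ∏_{k<n} g k` has the same mass as `x₀`, the accumulated gains are bounded by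
`d(x*, x₀)`. -/
lemma sum_gain_le {α : Type*} [MeasurableSpace α] {μ : Measure α} {x g : ℕ → α → ℝ} {xs : α → ℝ}
    (hx : ∀ n, Integrable (x n) μ) (hx0 : ∀ n, 0 ≤ᵐ[μ] x n)
    (hx1 : ∀ n, ∫ t, x n t ∂μ = 1)
    (hstep : ∀ n, x (n + 1) = fun t => x n t * g n t)
    (hg : ∀ n, ∀ᵐ t ∂μ, 0 < g n t) (hxs0 : 0 ≤ᵐ[μ] xs)
    (hgi : ∀ n, Integrable (fun t => xs t * Real.log (g n t)) μ)
    (hfin : Integrable (fun t => xs t * Real.log (xs t / x 0 t) - xs t + x 0 t) μ)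
    (hfin' : ∀ᵐ t ∂μ, x 0 t = 0 → xs t = 0) (n : ℕ) :
    ∑ k ∈ Finset.range n, ∫ t, xs t * Real.log (g k t) ∂μ ≤ KL μ xs (x 0) := by
  have hprod : ∀ n t, x n t = x 0 t * ∏ k ∈ Finset.range n, g k t := by
    intro n t
    induction n with
    | zero => simp
    | succ n ih => simp only [hstep, ih, Finset.prod_range_succ]; ring
  rw [← integral_finsetSum _ fun k _ => hgi k]
  calc ∫ t, ∑ k ∈ Finset.range n, xs t * Real.log (g k t) ∂μ
      ≤ ∫ t, ((xs t * Real.log (xs t / x 0 t) - xs t + x 0 t) - x 0 t + x n t) ∂μ := by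
        refine integral_mono_ae (integrable_finsetSum _ fun k _ => hgi k)
          ((hfin.sub (hx 0)).add (hx n)) ?_
        filter_upwards [ae_all_iff.2 hg, hxs0, hx0 0, hx0 n, hfin'] with t hgt hst h0 hn hz
        simp only [Pi.zero_apply] at hst h0 hn
        rcases hst.eq_or_lt with hs | hs
        · simpa [← hs] using hn
        have h0' : 0 < x 0 t := lt_of_le_of_ne h0 fun h => hs.ne' (hz h.symm)
        have hp : 0 < ∏ k ∈ Finset.range n, g k t := Finset.prod_pos fun k _ => hgt k
        have h := kl_integrand_nonneg hs (mul_pos h0' hp)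
        rw [← div_div, Real.log_div (div_pos hs h0').ne' hp.ne',
          Real.log_prod fun k _ => (hgt k).ne'] at h
        rw [← Finset.mul_sum, hprod n t]
        linarith
    _ = KL μ xs (x 0) := by
        have h1 : ∫ t, ((xs t * Real.log (xs t / x 0 t) - xs t + x 0 t) - x 0 t + x n t) ∂μ
            = ∫ t, ((xs t * Real.log (xs t / x 0 t) - xs t + x 0 t) - x 0 t) ∂μ + ∫ t, x n t ∂μ :=
          integral_add (hfin.sub (hx 0)) (hx n)
        rw [h1, integral_sub hfin (hx 0), hx1, hx1]
        unfold KL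
        ring

/-- under (A1)-(A4), `lim_{k → ∞} f_{[k]}(x_k) = 0`. -/
theorem osem_f_tendsto_zero
    {d : ℕ} (Ω S : Set (Fin d → ℝ))
    (hΩo : IsOpen Ω) (hΩb : Bornology.IsBounded Ω)
    (hSo : IsOpen S) (hSb : Bornology.IsBounded S)
    (N : ℕ) (hN : 0 < N)
    (a : ℕ → (Fin d → ℝ) → (Fin d → ℝ) → ℝ)
    (y : ℕ → (Fin d → ℝ) → ℝ)
    (ha_meas : ∀ j < N, Measurable (Function.uncurry (a j)))
    (m M : ℝ) (hm : 0 < m)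
    -- (A2)
    (hA2 : ∀ j < N, ∀ᵐ s ∂(volume.restrict S), ∀ᵐ t ∂(volume.restrict Ω),
      m ≤ a j s t ∧ a j s t ≤ M)
    -- (A1)
    (hA1 : ∀ j < N, ∀ᵐ t ∂(volume.restrict Ω), (∫ s in S, a j s t) = 1)
    (M' : ℝ) (hM' : 0 < M')
    (hy_int : ∀ j < N, Integrable (y j) (volume.restrict S))
    -- (A3)
    (hA3 : ∀ j < N, (0 ≤ᵐ[volume.restrict S] y j) ∧ (∫ s in S, y j s) = 1 ∧
      (∀ᵐ s ∂(volume.restrict S), y j s ≤ M'))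
    -- the OS-EM iteration
    (x : ℕ → (Fin d → ℝ) → ℝ)
    (hx0 : InDelta Ω (x 0))
    (hiter : ∀ k, x (k + 1) = emStep Ω S (a (k % N)) (y (k % N)) (x k))
    -- (A4): a nonnegative solution x* of the system, not a.e. zero, with d(x*, x_0) < ∞
    (xstar : (Fin d → ℝ) → ℝ)
    (hxstar_int : Integrable xstar (volume.restrict Ω))
    (hxstar_nonneg : 0 ≤ᵐ[volume.restrict Ω] xstar)
    (hxstar_ne : ¬ (xstar =ᵐ[volume.restrict Ω] (0 : (Fin d → ℝ) → ℝ)))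
    (hxstar_sol : ∀ j < N, opA Ω (a j) xstar =ᵐ[volume.restrict S] y j)
    (hfin : Integrable (fun t => xstar t * Real.log (xstar t / x 0 t) - xstar t + x 0 t)
      (volume.restrict Ω))
    (hfin' : ∀ᵐ t ∂(volume.restrict Ω), x 0 t = 0 → xstar t = 0)
 :
    Tendsto (fun k => KL (volume.restrict S) (y (k % N)) (opA Ω (a (k % N)) (x k)))
      atTop (nhds 0) := by
  have : IsFiniteMeasure ((volume : Measure (Fin d → ℝ)).restrict Ω) :=
    isFiniteMeasure_restrict.2 hΩb.measure_lt_top.ne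
  have : IsFiniteMeasure ((volume : Measure (Fin d → ℝ)).restrict S) :=
    isFiniteMeasure_restrict.2 hSb.measure_lt_top.ne
  have hj : ∀ k, k % N < N := fun k => Nat.mod_lt k hN
  have hAmax : ∀ j < N, ∀ᵐ s ∂(volume.restrict S), ∀ᵐ t ∂(volume.restrict Ω),
      m ≤ a j s t ∧ a j s t ≤ max M 1 := fun j hjN => by
    filter_upwards [hA2 j hjN] with s hs
    filter_upwards [hs] with t ht
    exact ⟨ht.1, ht.2.trans (le_max_left _ _)⟩
  set g : ℕ → (Fin d → ℝ) → ℝ := fun k => opAstar S (a (k % N))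
    (fun s => y (k % N) s / opA Ω (a (k % N)) (x k) s) with hg
  have hstep : ∀ k, x (k + 1) = fun t => x k t * g k t := hiter
  have main := fun k (h : InDelta Ω (x k)) =>
    emGain_bound (ha_meas _ (hj k)) hm (lt_max_of_lt_right one_pos) (hAmax _ (hj k))
      (hA1 _ (hj k)) (hy_int _ (hj k)) (hA3 _ (hj k)).2.1 h.1 h.2.1 h.2.2
      hxstar_int hxstar_nonneg (hxstar_sol _ (hj k)) (g := g k) rfl
  have hΔ : ∀ k, InDelta Ω (x k) := by
    intro k
    induction k with
    | zero => exact hx0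
    | succ k ih => rw [hstep]; exact (main k ih).1
  have hbound := sum_gain_le (fun n => (hΔ n).1) (fun n => (hΔ n).2.1) (fun n => (hΔ n).2.2)
    hstep (fun n => (main n (hΔ n)).2.1) hxstar_nonneg (fun n => (main n (hΔ n)).2.2.1) hfin hfin'
  refine (summable_of_sum_range_le (c := KL (volume.restrict Ω) xstar (x 0))
    (fun k => (main k (hΔ k)).2.2.2.2) fun n => ?_).tendsto_atTop_zero
  exact (Finset.sum_le_sum fun k _ => (main k (hΔ k)).2.2.2.1).trans (hbound n)
end
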